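/- arXiv:1605.03558 — 3 statements merged into one kernel-verified Lean document; each statement's English description precedes it below -/
import Mathlib

section
/- Let f(u) = u·(log(1+u))^a with 1 < a < 2. Let V, φ ∈ C¹([−1,1]) be nonnegative even functions with V(0) > 0, φ(0) > 0, φ(1) = 0, with V′ ≤ 0 and φ′ ≤ 0 on [0,1/3], and with 0 ≤ V(x) ≤ V(1/3) and 0 ≤ φ(x) ≤ φ(1/3) for all x ∈ [1/3,1]. Then there exists λ₀ > 0 such that for every λ ≥ λ₀ there is no nonnegative global classical solution u on [0,∞)×[−1,1] of the problem u_t = u_xx + V(x)f(u) on (0,∞)×(−1,1) with u(t,−1) = u(t,1) = 0 for all t > 0 and u(0,x) = λφ(x) for all x ∈ [−1,1]. -/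
open Set Metric Filter

/-- Pointwise subsolution inequality. -/
lemma sub_ineq (a c d : ℝ) (ha1 : 1 < a) (hc : 0 < c) (hd : 0 < d) :
    ∃ M : ℝ, 0 < M ∧ ∀ Y ≥ M, ∀ x : ℝ,
      (1 / (a - 1) * M ^ (1 - a)) * Y ^ a * (d ^ 2 - x ^ 2) ^ 2 ≤
        12 * x ^ 2 - 4 * d ^ 2 +
          c * (d ^ 2 - x ^ 2) ^ 2 * Real.log (1 + Real.exp Y * (d ^ 2 - x ^ 2) ^ 2) ^ a := by
  set c' := c * (1 / 2 : ℝ) ^ a with hc'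
  have hc'0 : 0 < c' := by positivity
  have hκ : Tendsto (fun M : ℝ => 1 / (a - 1) * M ^ (1 - a)) atTop (nhds 0) := by
    have := (tendsto_rpow_neg_atTop (y := a - 1) (by linarith)).const_mul (1 / (a - 1))
    simpa using this
  have e1 : ∀ᶠ M : ℝ in atTop, 1 / (a - 1) * M ^ (1 - a) < 1 :=
    hκ.eventually_lt_const (by norm_num)
  have e2 : ∀ᶠ M : ℝ in atTop, 1 / (a - 1) * M ^ (1 - a) < c' / 2 :=
    hκ.eventually_lt_const (by positivity)
  have e3 : ∀ᶠ Y : ℝ in atTop, Y ^ a ≤ 4 * d ^ 2 * Real.exp (Y / 2) := by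
    have h := isLittleO_rpow_exp_pos_mul_atTop a (b := 1 / 2) (by norm_num)
    have h2 := h.bound (c := 4 * d ^ 2) (by positivity)
    filter_upwards [h2, eventually_gt_atTop 0] with Y hY hY0
    rw [Real.norm_of_nonneg (by positivity), Real.norm_of_nonneg (by positivity)] at hY
    rwa [show Y / 2 = 1 / 2 * Y by ring]
  have e4 : ∀ᶠ Y : ℝ in atTop, 36 / d ^ 2 ≤ c' / 2 * Y ^ a :=
    ((tendsto_rpow_atTop (by linarith : 0 < a)).const_mul_atTop (by positivity)).eventually_ge_atTop _
  have e5 : ∀ᶠ Y : ℝ in atTop, 9 / d ^ 4 ≤ Real.exp (Y / 2) :=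
    (Real.tendsto_exp_atTop.comp (tendsto_id.atTop_div_const (by norm_num))).eventually_ge_atTop _
  obtain ⟨M, h1, h2, h3, hM⟩ := (e1.and (e2.and
    ((eventually_forall_ge_atTop.2 (e3.and (e4.and e5))).and (eventually_gt_atTop 0)))).exists
  refine ⟨M, hM, fun Y hY x => ?_⟩
  obtain ⟨h3, h4, h5⟩ := h3 Y hY
  have hY0 : 0 < Y := lt_of_lt_of_le hM hY
  have hκ0 : 0 ≤ 1 / (a - 1) * M ^ (1 - a) := by
    have : 0 < a - 1 := by linarith
    positivity
  generalize 1 / (a - 1) * M ^ (1 - a) = κ at *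
  set p := (d ^ 2 - x ^ 2) ^ 2 with hp
  have hp0 : 0 ≤ p := by positivity
  have hYa : 0 < Y ^ a := by positivity
  have hL0 : 0 ≤ Real.log (1 + Real.exp Y * p) := by
    apply Real.log_nonneg
    have : 0 ≤ Real.exp Y * p := by positivity
    linarith
  by_cases hA : κ * Y ^ a * p ≤ 12 * x ^ 2 - 4 * d ^ 2
  · have : 0 ≤ c * p * Real.log (1 + Real.exp Y * p) ^ a := by positivity
    linarith
  push Not at hA
  have hexp : Real.exp Y = Real.exp (Y / 2) * Real.exp (Y / 2) := by
    rw [← Real.exp_add]; congr 1; ring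
  have hE : 0 < Real.exp (Y / 2) := Real.exp_pos _
  have key : 1 ≤ Real.exp (Y / 2) * p →
      c' * Y ^ a * p ≤ c * p * Real.log (1 + Real.exp Y * p) ^ a := by
    intro h
    have hl : Y / 2 ≤ Real.log (1 + Real.exp Y * p) := by
      rw [Real.le_log_iff_exp_le (by positivity), hexp]
      nlinarith
    have := Real.rpow_le_rpow (by positivity) hl (by linarith : 0 ≤ a)
    rw [show Y / 2 = (1 / 2) * Y by ring, Real.mul_rpow (by norm_num) hY0.le] at this
    calc c' * Y ^ a * p = c * p * ((1 / 2) ^ a * Y ^ a) := by rw [hc']; ring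
      _ ≤ _ := by gcongr
  by_cases hB : 8 * d ^ 2 ≤ 12 * x ^ 2
  · have h6 : 4 * d ^ 2 < Y ^ a * p := by
      have : κ * (Y ^ a * p) ≤ 1 * (Y ^ a * p) := by gcongr
      linarith
    have h7 : 1 ≤ Real.exp (Y / 2) * p := by
      have : Y ^ a * p ≤ 4 * d ^ 2 * Real.exp (Y / 2) * p := by gcongr
      have hd2 : 0 < 4 * d ^ 2 := by positivity
      have h8 : 4 * d ^ 2 * 1 < 4 * d ^ 2 * (Real.exp (Y / 2) * p) := by linarith
      exact (lt_of_mul_lt_mul_left h8 hd2.le).le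
    have := key h7
    have h9 : κ * Y ^ a * p ≤ c' * Y ^ a * p := by
      have : κ ≤ c' := by linarith
      gcongr
    have : 0 < d ^ 2 := by positivity
    linarith
  · push Not at hB
    have h6 : d ^ 4 / 9 ≤ p := by
      have : d ^ 2 / 3 ≤ d ^ 2 - x ^ 2 := by linarith
      calc d ^ 4 / 9 = (d ^ 2 / 3) ^ 2 := by ring
        _ ≤ p := by rw [hp]; gcongr
    have h7 : 1 ≤ Real.exp (Y / 2) * p := by
      calc (1 : ℝ) = 9 / d ^ 4 * (d ^ 4 / 9) := by field_simp
        _ ≤ _ := by gcongr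
    have h8 := key h7
    have h9 : κ * (Y ^ a * p) ≤ c' / 2 * (Y ^ a * p) := by gcongr
    have h10 : 36 / d ^ 2 * (d ^ 4 / 9) ≤ c' / 2 * Y ^ a * p := by gcongr
    have h11 : 36 / d ^ 2 * (d ^ 4 / 9) = 4 * d ^ 2 := by field_simp; norm_num
    nlinarith [sq_nonneg x]

lemma second_deriv_nonneg (g : ℝ → ℝ) (x : ℝ) (hg : ContinuousAt g x) (hm : IsLocalMin g x) :
    0 ≤ deriv (deriv g) x := by
  by_contra h
  push Not at h
  have hM := isLocalMax_of_deriv_deriv_neg h hm.deriv_eq_zero hg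
  have hc : g =ᶠ[nhds x] fun _ => g x := by
    filter_upwards [hm, hM] with y h1 h2
    exact le_antisymm h2 h1
  have := hc.deriv.deriv_eq
  simp at this
  linarith

lemma deriv_left_min (h : ℝ → ℝ) (h' t : ℝ) (ht : 0 < t) (hd : HasDerivAt h h' t)
    (hm : ∀ s, 0 ≤ s → s ≤ t → h t ≤ h s) : h' ≤ 0 := by
  have h1 := (hasDerivWithinAt_iff_tendsto_slope' (s := Iio t) (by simp)).1 hd.hasDerivWithinAt
  refine le_of_tendsto h1 ?_
  filter_upwards [self_mem_nhdsWithin, mem_nhdsWithin_of_mem_nhds (lt_mem_nhds ht)] with s hs hs0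
  have hs : s < t := hs
  rw [slope_def_field]
  apply div_nonpos_of_nonneg_of_nonpos
  · linarith [hm s (le_of_lt hs0) hs.le]
  · linarith

lemma f_lip (a W : ℝ) (ha1 : 1 < a) : ∃ L : ℝ, 0 ≤ L ∧ ∀ r s : ℝ, 0 ≤ r → r ≤ s → s ≤ W →
    s * Real.log (1 + s) ^ a - r * Real.log (1 + r) ^ a ≤ L * (s - r) := by
  have hc : ContDiffOn ℝ 1 (fun s : ℝ => s * Real.log (1 + s) ^ a) (Icc 0 W) := by
    apply contDiffOn_id.mul
    apply (Real.contDiff_rpow_const_of_le (n := 1) (by exact_mod_cast ha1.le)).comp_contDiffOn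
    apply ContDiffOn.log
    · fun_prop
    · intro x hx
      have := hx.1
      positivity
  obtain ⟨K, hK⟩ := hc.exists_lipschitzOnWith (by norm_num) (convex_Icc 0 W) isCompact_Icc
  refine ⟨K, K.2, fun r s hr hrs hs => ?_⟩
  have := hK.dist_le_mul s ⟨by linarith, hs⟩ r ⟨hr, by linarith⟩
  rw [Real.dist_eq, Real.dist_eq, abs_of_nonneg (by linarith : 0 ≤ s - r)] at this
  exact (le_abs_self _).trans this

/-- Comparison on `[0,T] × [-d,d]` with the explicit subsolution `exp (Y t) (d²-x²)²`. -/
lemma comparison (a c d T : ℝ) (ha1 : 1 < a) (hc : 0 < c) (hd : 0 < d)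
    (V : ℝ → ℝ) (hV : ∀ x ∈ Icc (-d) d, c ≤ V x) (Y Y' : ℝ → ℝ)
    (hYc : ContinuousOn Y (Icc 0 T)) (hY : ∀ t ∈ Ioc 0 T, HasDerivAt Y (Y' t) t)
    (hsub : ∀ t ∈ Ioc 0 T, ∀ x : ℝ, Y' t * (d ^ 2 - x ^ 2) ^ 2 ≤
        12 * x ^ 2 - 4 * d ^ 2 +
          c * (d ^ 2 - x ^ 2) ^ 2 * Real.log (1 + Real.exp (Y t) * (d ^ 2 - x ^ 2) ^ 2) ^ a)
    (u : ℝ → ℝ → ℝ)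
    (huc : ContinuousOn (fun q : ℝ × ℝ => u q.1 q.2) (Icc 0 T ×ˢ Icc (-d) d))
    (heq : ∀ t ∈ Ioc 0 T, ∀ x ∈ Ioo (-d) d,
      DifferentiableAt ℝ (fun s => u s x) t ∧ ContDiffAt ℝ 2 (u t) x ∧
      deriv (fun s => u s x) t = deriv (deriv (u t)) x + V x * (u t x * Real.log (1 + u t x) ^ a))
    (h0 : ∀ x ∈ Icc (-d) d, Real.exp (Y 0) * (d ^ 2 - x ^ 2) ^ 2 ≤ u 0 x)
    (hu : ∀ t ∈ Icc 0 T, ∀ x ∈ Icc (-d) d, 0 ≤ u t x) :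
    ∀ t ∈ Icc 0 T, ∀ x ∈ Icc (-d) d, Real.exp (Y t) * (d ^ 2 - x ^ 2) ^ 2 ≤ u t x := by
  intro t₁ ht₁ x₁ hx₁
  by_contra hneg
  push Not at hneg
  have hK : IsCompact (Icc 0 T ×ˢ Icc (-d) d) := isCompact_Icc.prod isCompact_Icc
  have hYc2 : ContinuousOn (fun q : ℝ × ℝ => Y q.1) (Icc 0 T ×ˢ Icc (-d) d) :=
    hYc.comp continuousOn_fst (fun q hq => hq.1)
  have hwc : ContinuousOn (fun q : ℝ × ℝ => Real.exp (Y q.1) * (d ^ 2 - q.2 ^ 2) ^ 2)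
      (Icc 0 T ×ˢ Icc (-d) d) := by
    apply ContinuousOn.mul hYc2.rexp
    fun_prop
  obtain ⟨W, hW⟩ := hK.bddAbove_image hwc
  have hW : ∀ t ∈ Icc 0 T, ∀ x ∈ Icc (-d) d, Real.exp (Y t) * (d ^ 2 - x ^ 2) ^ 2 ≤ W := by
    intro t ht x hx
    exact hW ⟨(t, x), ⟨ht, hx⟩, rfl⟩
  obtain ⟨L, hL0, hL⟩ := f_lip a W ha1
  set K := c * L + 1 with hKdef
  have hzc : ContinuousOn (fun q : ℝ × ℝ => Real.exp (-K * q.1) *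
      (u q.1 q.2 - Real.exp (Y q.1) * (d ^ 2 - q.2 ^ 2) ^ 2)) (Icc 0 T ×ˢ Icc (-d) d) := by
    apply ContinuousOn.mul (by fun_prop) (huc.sub hwc)
  obtain ⟨⟨t, x⟩, ⟨ht, hx⟩, hmin⟩ := hK.exists_isMinOn ⟨(t₁, x₁), ht₁, hx₁⟩ hzc
  simp only at ht hx
  have hmin : ∀ s ∈ Icc 0 T, ∀ y ∈ Icc (-d) d,
      Real.exp (-K * t) * (u t x - Real.exp (Y t) * (d ^ 2 - x ^ 2) ^ 2) ≤
      Real.exp (-K * s) * (u s y - Real.exp (Y s) * (d ^ 2 - y ^ 2) ^ 2) := by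
    intro s hs y hy
    exact hmin (show (s, y) ∈ _ from ⟨hs, hy⟩)
  have hz : u t x - Real.exp (Y t) * (d ^ 2 - x ^ 2) ^ 2 < 0 := by
    have h1 := hmin t₁ ht₁ x₁ hx₁
    have h2 : Real.exp (-K * t₁) * (u t₁ x₁ - Real.exp (Y t₁) * (d ^ 2 - x₁ ^ 2) ^ 2) < 0 :=
      mul_neg_of_pos_of_neg (Real.exp_pos _) (by linarith)
    by_contra h
    push Not at h
    have := mul_nonneg (Real.exp_pos (-K * t)).le h
    linarith
  have ht0 : 0 < t := by
    rcases ht.1.lt_or_eq with h | h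
    · exact h
    · subst h
      linarith [h0 x hx]
  have htT : t ∈ Ioc 0 T := ⟨ht0, ht.2⟩
  have hu0 := hu t ht x hx
  have hxi : x ∈ Ioo (-d) d := by
    have hne : d ^ 2 - x ^ 2 ≠ 0 := by
      intro h
      rw [h] at hz
      simp at hz
      linarith
    constructor
    · refine lt_of_le_of_ne hx.1 ?_
      rintro rfl
      exact hne (by ring)
    · refine lt_of_le_of_ne hx.2 ?_
      rintro rfl
      exact hne (by ring)
  obtain ⟨hut, hux, hpde⟩ := heq t htT x hxi
  set w := Real.exp (Y t) * (d ^ 2 - x ^ 2) ^ 2 with hw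
  -- time derivative
  have hwt : HasDerivAt (fun s => Real.exp (Y s) * (d ^ 2 - x ^ 2) ^ 2) (Y' t * w) t := by
    have := ((hY t htT).exp).mul_const ((d ^ 2 - x ^ 2) ^ 2)
    exact this.congr_deriv (by rw [hw]; ring)
  have hexpd : HasDerivAt (fun s => Real.exp (-K * s)) (Real.exp (-K * t) * -K) t := by
    have := ((hasDerivAt_id t).const_mul (-K)).exp
    simpa using this
  have hD := hexpd.mul (hut.hasDerivAt.sub hwt)
  have hle := deriv_left_min _ _ t ht0 hD (by
    intro s hs0 hst
    exact hmin s ⟨hs0, hst.trans ht.2⟩ x hx)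
  have htime : deriv (fun s => u s x) t - Y' t * w ≤ K * (u t x - w) := by
    have he := Real.exp_pos (-K * t)
    simp only [Pi.sub_apply] at hle
    have : Real.exp (-K * t) * ((deriv (fun s => u s x) t - Y' t * w) - K * (u t x - w)) ≤ 0 := by
      rw [← hw] at hle
      linarith
    have := nonpos_of_mul_nonpos_right this he
    linarith
  -- space derivative
  have hwx : ∀ y : ℝ, HasDerivAt (fun y => Real.exp (Y t) * (d ^ 2 - y ^ 2) ^ 2)
      (Real.exp (Y t) * (-4 * y * (d ^ 2 - y ^ 2))) y := by
    intro y
    have := ((((hasDerivAt_id y).pow 2).const_sub (d ^ 2)).pow 2).const_mul (Real.exp (Y t))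
    exact this.congr_deriv (by simp; ring)
  have hwxx : HasDerivAt (fun y => Real.exp (Y t) * (-4 * y * (d ^ 2 - y ^ 2)))
      (Real.exp (Y t) * (12 * x ^ 2 - 4 * d ^ 2)) x := by
    have := (((hasDerivAt_id x).const_mul (-4)).mul
      (((hasDerivAt_id x).pow 2).const_sub (d ^ 2))).const_mul (Real.exp (Y t))
    exact this.congr_deriv (by simp; ring)
  have hlm : IsLocalMin (fun y => u t y - Real.exp (Y t) * (d ^ 2 - y ^ 2) ^ 2) x := by
    filter_upwards [Ioo_mem_nhds hxi.1 hxi.2] with y hy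
    have := hmin t ht y ⟨hy.1.le, hy.2.le⟩
    exact le_of_mul_le_mul_left this (Real.exp_pos _)
  have hsp := second_deriv_nonneg (fun y => u t y - Real.exp (Y t) * (d ^ 2 - y ^ 2) ^ 2) x
    (hux.continuousAt.sub (hwx x).continuousAt) hlm
  have hdd : ∀ᶠ y in nhds x, deriv (fun y => u t y - Real.exp (Y t) * (d ^ 2 - y ^ 2) ^ 2) y =
      deriv (u t) y - Real.exp (Y t) * (-4 * y * (d ^ 2 - y ^ 2)) := by
    filter_upwards [hux.eventually (by simp)] with y hy
    exact ((hy.differentiableAt (by norm_num)).hasDerivAt.sub (hwx y)).deriv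
  have hd2 : DifferentiableAt ℝ (deriv (u t)) x := by
    have h1 : DifferentiableAt ℝ (fderiv ℝ (u t)) x :=
      (hux.fderiv_right (m := 1) (by norm_num)).differentiableAt (by norm_num)
    have h2 : DifferentiableAt ℝ (fun y => fderiv ℝ (u t) y 1) x := by fun_prop
    exact h2
  have hsp2 : Real.exp (Y t) * (12 * x ^ 2 - 4 * d ^ 2) ≤ deriv (deriv (u t)) x := by
    have h3 := (hd2.hasDerivAt.sub hwxx).deriv
    have h4 := (Filter.EventuallyEq.deriv_eq hdd).trans h3
    rw [h4] at hsp
    linarith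
  -- combine
  have hf := hL (u t x) w hu0 (by linarith) (hW t ht x hx)
  have hsub' := mul_le_mul_of_nonneg_left (hsub t htT x) (Real.exp_pos (Y t)).le
  have hVx := hV x hx
  have hfu : 0 ≤ u t x * Real.log (1 + u t x) ^ a := by
    have : 0 ≤ Real.log (1 + u t x) := Real.log_nonneg (by linarith)
    positivity
  have h1 := mul_le_mul_of_nonneg_right hVx hfu
  have h2 := mul_le_mul_of_nonneg_left hf hc.le
  have h3 : Y' t * w ≤ Real.exp (Y t) * (12 * x ^ 2 - 4 * d ^ 2) +
      c * (w * Real.log (1 + w) ^ a) := by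
    rw [← hw] at hsub'
    calc Y' t * w = Real.exp (Y t) * (Y' t * (d ^ 2 - x ^ 2) ^ 2) := by rw [hw]; ring
      _ ≤ _ := hsub'
      _ = _ := by nth_rewrite 3 [hw]; ring
  nlinarith

theorem stmt15
    (a : ℝ) (ha1 : 1 < a) (ha2 : a < 2)
    (V φ : ℝ → ℝ)
    (hV_C1 : ContDiffOn ℝ 1 V (Icc (-1) 1)) (hφ_C1 : ContDiffOn ℝ 1 φ (Icc (-1) 1))
    (hV_nonneg : ∀ x ∈ Icc (-1:ℝ) 1, 0 ≤ V x) (hφ_nonneg : ∀ x ∈ Icc (-1:ℝ) 1, 0 ≤ φ x)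
    (hV_even : ∀ x ∈ Icc (-1:ℝ) 1, V (-x) = V x) (hφ_even : ∀ x ∈ Icc (-1:ℝ) 1, φ (-x) = φ x)
    (hV0 : 0 < V 0) (hφ0 : 0 < φ 0) (hφ1 : φ 1 = 0)
    (hV' : ∀ x ∈ Icc (0:ℝ) (1/3), derivWithin V (Icc (-1) 1) x ≤ 0)
    (hφ' : ∀ x ∈ Icc (0:ℝ) (1/3), derivWithin φ (Icc (-1) 1) x ≤ 0)
    (hVbd : ∀ x ∈ Icc (1/3:ℝ) 1, V x ≤ V (1/3))
    (hφbd : ∀ x ∈ Icc (1/3:ℝ) 1, φ x ≤ φ (1/3))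
    :
    ∃ lam₀ > 0, ∀ lam ≥ lam₀,
      ¬ ∃ u : ℝ → ℝ → ℝ,
        ContinuousOn (fun q : ℝ × ℝ => u q.1 q.2) (Ici 0 ×ˢ Icc (-1) 1) ∧
        (∀ t > (0:ℝ), ∀ x ∈ Ioo (-1:ℝ) 1,
          DifferentiableAt ℝ (fun s => u s x) t ∧ ContDiffAt ℝ 2 (u t) x ∧
          deriv (fun s => u s x) t = deriv (deriv (u t)) x + V x * (u t x * Real.log (1 + u t x) ^ a)) ∧
        (∀ t > (0:ℝ), u t (-1) = 0 ∧ u t 1 = 0) ∧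
        (∀ x ∈ Icc (-1:ℝ) 1, u 0 x = lam * φ x) ∧
        (∀ t ≥ (0:ℝ), ∀ x ∈ Icc (-1:ℝ) 1, 0 ≤ u t x) := by
  have hcV : ContinuousAt V 0 :=
    hV_C1.continuousOn.continuousAt (Icc_mem_nhds (by norm_num) (by norm_num))
  have hcφ : ContinuousAt φ 0 :=
    hφ_C1.continuousOn.continuousAt (Icc_mem_nhds (by norm_num) (by norm_num))
  have hev : ∀ᶠ x in nhds (0 : ℝ), V 0 / 2 < V x ∧ φ 0 / 2 < φ x :=
    (hcV.eventually_const_lt (by linarith)).and (hcφ.eventually_const_lt (by linarith))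
  obtain ⟨e, he, hball⟩ := Metric.eventually_nhds_iff.1 hev
  obtain ⟨d, hd, hde, hd1⟩ : ∃ d : ℝ, 0 < d ∧ d < e ∧ d < 1 :=
    ⟨min e 1 / 2, by positivity, by have := min_le_left e 1; linarith,
      by have := min_le_right e 1; linarith⟩
  have hloc : ∀ x ∈ Icc (-d) d, V 0 / 2 ≤ V x ∧ φ 0 / 2 ≤ φ x := by
    intro x hx
    have hx' : dist x 0 < e := by
      rw [Real.dist_eq, sub_zero, abs_lt]
      exact ⟨by linarith [hx.1], by linarith [hx.2]⟩
    exact ⟨(hball hx').1.le, (hball hx').2.le⟩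
  obtain ⟨M, hM, hsub⟩ := sub_ineq a (V 0 / 2) d ha1 (by linarith) hd
  refine ⟨Real.exp M * d ^ 4 / (φ 0 / 2), by positivity, fun lam hlam => ?_⟩
  rintro ⟨u, huc, heq, -, hini, hnn⟩
  have ha0 : 0 < a - 1 := by linarith
  set s := 1 / (a - 1) with hs
  have hs0 : 0 < s := by positivity
  have hlam0 : 0 ≤ lam := le_trans (by positivity) hlam
  have hdsub : Icc (-d) d ⊆ Icc (-1 : ℝ) 1 := Icc_subset_Icc (by linarith) hd1.le
  set Y : ℝ → ℝ := fun t => M * (1 - t) ^ (-s) with hYdef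
  have hYder : ∀ t < 1, HasDerivAt Y ((s * M ^ (1 - a)) * (Y t) ^ a) t := by
    intro t ht
    have h1t : 0 < 1 - t := by linarith
    have := (((hasDerivAt_id t).const_sub 1).rpow_const (p := -s) (Or.inl h1t.ne')).const_mul M
    refine this.congr_deriv ?_
    symm
    simp only [hYdef, id]
    rw [Real.mul_rpow hM.le (by positivity), ← Real.rpow_mul h1t.le,
      show -s * a = -s - 1 by rw [hs]; field_simp; ring]
    calc s * M ^ (1 - a) * (M ^ a * (1 - t) ^ (-s - 1))
        = s * (M ^ (1 - a) * M ^ a) * (1 - t) ^ (-s - 1) := by ring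
      _ = s * M * (1 - t) ^ (-s - 1) := by
          rw [← Real.rpow_add hM]; simp
      _ = _ := by ring
  have hYM : ∀ t, 0 ≤ t → t < 1 → M ≤ Y t := by
    intro t h0 h1
    have : 1 ≤ (1 - t) ^ (-s) :=
      Real.one_le_rpow_of_pos_of_le_one_of_nonpos (by linarith) (by linarith) (by linarith)
    simp only [hYdef]
    nlinarith
  have hcomp : ∀ T, 0 ≤ T → T < 1 → Real.exp (Y T) * d ^ 4 ≤ u T 0 := by
    intro T hT0 hT1
    have := comparison a (V 0 / 2) d T ha1 (by linarith) hd V (fun x hx => (hloc x hx).1) Y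
      (fun t => (s * M ^ (1 - a)) * (Y t) ^ a)
      (fun t ht => (hYder t (lt_of_le_of_lt ht.2 hT1)).continuousAt.continuousWithinAt)
      (fun t ht => hYder t (lt_of_le_of_lt ht.2 hT1))
      (fun t ht x => hsub (Y t) (hYM t ht.1.le (lt_of_le_of_lt ht.2 hT1)) x) u
      (huc.mono (prod_mono Icc_subset_Ici_self hdsub))
      (fun t ht x hx => heq t ht.1 x ⟨by linarith [hx.1], by linarith [hx.2]⟩)
      ?_ (fun t ht x hx => hnn t ht.1 x (hdsub hx)) T ⟨hT0, le_rfl⟩ 0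
      ⟨by linarith, hd.le⟩
    · calc _ = _ := by ring
        _ ≤ _ := this
    · intro x hx
      rw [hini x (hdsub hx)]
      have hY0 : Y 0 = M := by simp [hYdef]
      rw [hY0]
      have hx2 : x ^ 2 ≤ d ^ 2 := sq_le_sq' hx.1 hx.2
      have h1 : (d ^ 2 - x ^ 2) ^ 2 ≤ d ^ 4 := by
        nlinarith [sq_nonneg x]
      calc Real.exp M * (d ^ 2 - x ^ 2) ^ 2 ≤ Real.exp M * d ^ 4 := by gcongr
        _ ≤ lam * (φ 0 / 2) := (div_le_iff₀ (by linarith)).1 hlam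
        _ ≤ _ := by
          have := (hloc x hx).2
          gcongr
  have hbc : ContinuousOn (fun t => u t 0) (Icc 0 1) := by
    have : ContinuousOn (fun t : ℝ => ((t, 0) : ℝ × ℝ)) (Icc 0 1) := by fun_prop
    exact huc.comp this (fun t ht => ⟨ht.1, by norm_num, by norm_num⟩)
  obtain ⟨B, hB⟩ := isCompact_Icc.bddAbove_image hbc
  have hlim : Tendsto Y (nhdsWithin 1 (Iio 1)) atTop := by
    apply Tendsto.const_mul_atTop hM
    have h1 : Tendsto (fun t : ℝ => 1 - t) (nhdsWithin 1 (Iio 1)) (nhdsWithin 0 (Ioi 0)) := by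
      apply tendsto_nhdsWithin_of_tendsto_nhds_of_eventually_within
      · have : ContinuousAt (fun t : ℝ => 1 - t) 1 := by fun_prop
        have h := this.tendsto
        simp only [sub_self] at h
        exact h.mono_left nhdsWithin_le_nhds
      · filter_upwards [self_mem_nhdsWithin] with t ht
        simpa using ht
    exact (tendsto_rpow_neg_nhdsGT_zero (by linarith)).comp h1
  have hbig := ((Real.tendsto_exp_atTop.comp hlim).atTop_mul_const
    (by positivity : 0 < d ^ 4)).eventually_gt_atTop B
  obtain ⟨t, h1, h2, h3⟩ := (hbig.and ((eventually_mem_nhdsWithin (s := Iio (1 : ℝ))).and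
    (eventually_nhdsWithin_of_eventually_nhds (lt_mem_nhds zero_lt_one)))).exists
  have h2 : t < 1 := h2
  have h3 : 0 < t := h3
  have h4 := hcomp t h3.le h2
  have h5 : u t 0 ≤ B := hB ⟨t, ⟨h3.le, h2.le⟩, rfl⟩
  simp only [Function.comp] at h1
  linarith
end

section
/- Let f(u) = u·(log(1+u))^a with 1 < a < 2. Let V, φ ∈ C¹([−1,1]) be nonnegative even functions with V(0) > 0, φ(0) > 0, φ(1) = 0, with V′ ≤ 0 and φ′ ≤ 0 on [0,1/3], and with 0 ≤ V(x) ≤ V(1/3) and 0 ≤ φ(x) ≤ φ(1/3) for all x ∈ [1/3,1]. Let λ > 0, let 0 < T < ∞, and let u be a nonnegative classical solution on [0,T)×[−1,1] of u_t = u_xx + V(x)f(u) with u(t,±1) = 0 and u(0,·) = λφ, which blows up at time T in the sense that limsup_{t→T⁻} max_{x∈[−1,1]} u(t,x) = +∞. Then blowup is global: lim_{t→T⁻} u(t,x) = +∞ for every x ∈ (−1,1). -/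
open Set Metric Filter

namespace GB
open Topology

/-- `g` is twice differentiable at `x` with second derivative `g2`. -/
def D2 (g : ℝ → ℝ) (g2 x : ℝ) : Prop :=
  ∃ p : ℝ → ℝ, (∀ᶠ y in 𝓝 x, HasDerivAt g (p y) y) ∧ HasDerivAt p g2 x

lemma D2.sub {g h : ℝ → ℝ} {g2 h2 x : ℝ} (hg : D2 g g2 x) (hh : D2 h h2 x) :
    D2 (fun y => g y - h y) (g2 - h2) x := by
  obtain ⟨p, hp, hp2⟩ := hg
  obtain ⟨r, hr, hr2⟩ := hh
  refine ⟨fun y => p y - r y, ?_, hp2.sub hr2⟩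
  filter_upwards [hp, hr] with y h1 h2 using h1.sub h2

lemma D2.const_mul {g : ℝ → ℝ} {g2 x : ℝ} (c : ℝ) (hg : D2 g g2 x) :
    D2 (fun y => c * g y) (c * g2) x := by
  obtain ⟨p, hp, hp2⟩ := hg
  refine ⟨fun y => c * p y, ?_, hp2.const_mul c⟩
  filter_upwards [hp] with y h1 using h1.const_mul c

lemma D2.reflect {g : ℝ → ℝ} {g2 x : ℝ} (c : ℝ) (hg : D2 g g2 (c - x)) :
    D2 (fun y => g (c - y)) g2 x := by
  obtain ⟨p, hp, hp2⟩ := hg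
  have ht : Tendsto (fun y : ℝ => c - y) (𝓝 x) (𝓝 (c - x)) :=
    (continuous_const.sub continuous_id).tendsto x
  refine ⟨fun y => - p (c - y), ?_, ?_⟩
  · filter_upwards [ht.eventually hp] with y h1
    have := h1.comp_const_sub c y
    exact this
  · have := (hp2.comp_const_sub c x).neg
    rw [neg_neg] at this
    exact this

lemma D2.nonpos {g : ℝ → ℝ} {g2 x : ℝ} (hg : D2 g g2 x) (hm : ∀ᶠ y in 𝓝 x, g y ≤ g x) :
    g2 ≤ 0 := by
  obtain ⟨p, hp, hp2⟩ := hg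
  by_contra hc
  push Not at hc
  have hmax : IsLocalMax g x := hm
  have hd : deriv g =ᶠ[𝓝 x] p := hp.mono fun y hy => hy.deriv
  have hdd : deriv (deriv g) x = g2 := by rw [hd.deriv_eq]; exact hp2.deriv
  have hmin : IsLocalMin g x :=
    isLocalMin_of_deriv_deriv_pos (by rw [hdd]; exact hc) hmax.deriv_eq_zero
      hp.self_of_nhds.continuousAt
  have he : g =ᶠ[𝓝 x] fun _ => g x := by
    filter_upwards [hmax, hmin] with y h1 h2 using le_antisymm h1 h2
  have : deriv (deriv g) x = 0 := by
    have h1 : deriv g =ᶠ[𝓝 x] deriv (fun _ => g x) := he.deriv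
    rw [h1.deriv_eq]; simp
  linarith

lemma left_deriv_nonneg {g : ℝ → ℝ} {g' t : ℝ} (hg : HasDerivAt g g' t)
    (hm : ∀ᶠ s in 𝓝[<] t, g s ≤ g t) : 0 ≤ g' := by
  have h1 : Tendsto (slope g t) (𝓝[<] t) (𝓝 g') :=
    (hasDerivAt_iff_tendsto_slope.1 hg).mono_left
      (nhdsWithin_mono _ (fun s (hs : s < t) => hs.ne))
  refine ge_of_tendsto h1 ?_
  filter_upwards [hm, self_mem_nhdsWithin] with s hs hst
  have hst' : s < t := hst
  rw [slope_def_field]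
  exact div_nonneg_of_nonpos (by linarith) (by linarith)

lemma mp1 {D : Set (ℝ × ℝ)} (hD : IsCompact D) {v : ℝ → ℝ → ℝ}
    (hv : ContinuousOn (fun q : ℝ × ℝ => v q.1 q.2) D)
    (h : ∀ t x, (t, x) ∈ D → 0 < v t x →
      (∀ᶠ s in 𝓝[<] t, (s, x) ∈ D) ∧ (∀ᶠ y in 𝓝 x, (t, y) ∈ D) ∧
      ∃ vt vxx, HasDerivAt (fun s => v s x) vt t ∧ D2 (v t) vxx x ∧ vt < vxx) :
    ∀ t x, (t, x) ∈ D → v t x ≤ 0 := by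
  intro t x htx
  by_contra hc
  push Not at hc
  obtain ⟨⟨t₁, x₁⟩, hm, hmax⟩ := hD.exists_isMaxOn ⟨_, htx⟩ hv
  have h0 : v t x ≤ v t₁ x₁ := hmax htx
  obtain ⟨h1, h2, vt, vxx, h3, h4, h5⟩ := h t₁ x₁ hm (by linarith)
  have h6 := left_deriv_nonneg h3 (h1.mono fun s hs => hmax hs)
  have h7 := h4.nonpos (h2.mono fun s hs => hmax hs)
  linarith

lemma mp2 {D : Set (ℝ × ℝ × ℝ)} (hD : IsCompact D) {v : ℝ → ℝ → ℝ → ℝ}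
    (hv : ContinuousOn (fun q : ℝ × ℝ × ℝ => v q.1 q.2.1 q.2.2) D)
    (h : ∀ t x y, (t, x, y) ∈ D → 0 < v t x y →
      (∀ᶠ s in 𝓝[<] t, (s, x, y) ∈ D) ∧ (∀ᶠ z in 𝓝 x, (t, z, y) ∈ D) ∧
      (∀ᶠ z in 𝓝 y, (t, x, z) ∈ D) ∧
      ∃ vt vxx vyy, HasDerivAt (fun s => v s x y) vt t ∧ D2 (fun z => v t z y) vxx x ∧
        D2 (fun z => v t x z) vyy y ∧ vt < vxx + vyy) :
    ∀ t x y, (t, x, y) ∈ D → v t x y ≤ 0 := by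
  intro t x y htx
  by_contra hc
  push Not at hc
  obtain ⟨⟨t₁, x₁, y₁⟩, hm, hmax⟩ := hD.exists_isMaxOn ⟨_, htx⟩ hv
  have h0 : v t x y ≤ v t₁ x₁ y₁ := hmax htx
  obtain ⟨h1, h2, h2', vt, vxx, vyy, h3, h4, h4', h5⟩ := h t₁ x₁ y₁ hm (by linarith)
  have h6 := left_deriv_nonneg h3 (h1.mono fun s hs => hmax hs)
  have h7 := h4.nonpos (h2.mono fun s hs => hmax hs)
  have h8 := h4'.nonpos (h2'.mono fun s hs => hmax hs)
  linarith

/-- The nonlinearity. -/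
noncomputable def F (a z : ℝ) : ℝ := z * Real.log (1 + z) ^ a

lemma F_nonneg {a z : ℝ} (hz : 0 ≤ z) : 0 ≤ F a z :=
  mul_nonneg hz (Real.rpow_nonneg (Real.log_nonneg (by linarith)) _)

lemma F_le {a z w : ℝ} (ha : 1 < a) (hz : 0 ≤ z) (hzw : z ≤ w) :
    F a z ≤ w * Real.log (1 + w) ^ a := by
  have h0 : 0 ≤ Real.log (1 + z) := Real.log_nonneg (by linarith)
  have h1 : Real.log (1 + z) ≤ Real.log (1 + w) := Real.log_le_log (by linarith) (by linarith)
  exact mul_le_mul hzw (Real.rpow_le_rpow h0 h1 (by linarith)) (Real.rpow_nonneg h0 _)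
    (by linarith)

lemma F_lip {a : ℝ} (ha : 1 < a) (U : ℝ) :
    ∃ K, 0 ≤ K ∧ ∀ z w, 0 ≤ z → z ≤ w → w ≤ U → F a w - F a z ≤ K * (w - z) := by
  have hc : ContDiffOn ℝ 1 (F a) (Icc 0 U) := by
    unfold F
    refine contDiffOn_id.mul ?_
    have h1 : ContDiff ℝ 1 (fun x : ℝ => x ^ a) := by
      have := Real.contDiff_rpow_const_of_le (p := a) (n := 1) (by exact_mod_cast ha.le)
      exact_mod_cast this
    refine h1.comp_contDiffOn ?_
    refine ContDiffOn.log (contDiffOn_const.add contDiffOn_id) ?_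
    intro x hx
    have := hx.1
    change 1 + x ≠ 0
    linarith
  obtain ⟨K, hK⟩ := hc.exists_lipschitzOnWith (by norm_num) (convex_Icc _ _) isCompact_Icc
  refine ⟨K, K.2, fun z w hz hzw hw => ?_⟩
  have := hK.dist_le_mul w ⟨by linarith, hw⟩ z ⟨hz, by linarith⟩
  rw [Real.dist_eq, Real.dist_eq, abs_of_nonneg (by linarith : 0 ≤ w - z)] at this
  exact (le_abs_self _).trans this

/-- Nonnegative solutions, in the form used below. -/
structure Sol (a T : ℝ) (V : ℝ → ℝ) (u : ℝ → ℝ → ℝ) : Prop where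
  cont : ContinuousOn (fun q : ℝ × ℝ => u q.1 q.2) (Ico 0 T ×ˢ Icc (-1) 1)
  nonneg : ∀ t ∈ Ico 0 T, ∀ x ∈ Icc (-1:ℝ) 1, 0 ≤ u t x
  eqn : ∀ t ∈ Ioo 0 T, ∀ x ∈ Ioo (-1:ℝ) 1, ∃ ut uxx, HasDerivAt (fun s => u s x) ut t ∧
    D2 (u t) uxx x ∧ ut = uxx + V x * F a (u t x)
  bc : ∀ t ∈ Ico 0 T, u t (-1) = 0 ∧ u t 1 = 0

lemma Sol.bdd {a T : ℝ} {V : ℝ → ℝ} {u : ℝ → ℝ → ℝ} (S : Sol a T V u) {t₀ : ℝ}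
    (ht : t₀ ∈ Ico 0 T) :
    ∃ t₁ ∈ Icc 0 t₀, ∃ x₁ ∈ Icc (-1:ℝ) 1, ∀ t ∈ Icc 0 t₀, ∀ x ∈ Icc (-1:ℝ) 1,
      u t x ≤ u t₁ x₁ := by
  have hK : IsCompact (Icc 0 t₀ ×ˢ Icc (-1:ℝ) 1) := isCompact_Icc.prod isCompact_Icc
  obtain ⟨⟨t₁, x₁⟩, hm, hmax⟩ := hK.exists_isMaxOn ⟨(0, 0), ⟨⟨le_rfl, ht.1⟩, by norm_num⟩⟩
    (S.cont.mono (prod_mono (fun t h => ⟨h.1, h.2.trans_lt ht.2⟩) subset_rfl))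
  exact ⟨t₁, hm.1, x₁, hm.2, fun t h x hx => hmax (⟨h, hx⟩ : (t, x) ∈ _ ×ˢ _)⟩

lemma Sol.neg {a T : ℝ} {V : ℝ → ℝ} {u : ℝ → ℝ → ℝ} (S : Sol a T V u) :
    Sol a T (fun x => V (-x)) (fun t x => u t (-x)) := by
  have hn : ∀ x ∈ Icc (-1:ℝ) 1, -x ∈ Icc (-1:ℝ) 1 := fun x hx =>
    ⟨by linarith [hx.2], by linarith [hx.1]⟩
  refine ⟨?_, fun t ht x hx => S.nonneg t ht _ (hn x hx), ?_, fun t ht => ?_⟩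
  · refine S.cont.comp (f := fun q : ℝ × ℝ => (q.1, -q.2)) (by fun_prop) ?_
    intro q hq
    exact ⟨hq.1, hn _ hq.2⟩
  · intro t ht x hx
    obtain ⟨ut, uxx, h1, h2, h3⟩ := S.eqn t ht (-x) ⟨by linarith [hx.2], by linarith [hx.1]⟩
    refine ⟨ut, uxx, h1, ?_, h3⟩
    have := D2.reflect (g := u t) (x := x) 0 (by simpa using h2)
    simpa using this
  · have := S.bc t ht
    simp [this.1, this.2]

lemma reflect {a T : ℝ} {V : ℝ → ℝ} {u : ℝ → ℝ → ℝ} (ha : 1 < a) (S : Sol a T V u) {Vm : ℝ}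
    (hV0 : ∀ x ∈ Icc (-1:ℝ) 1, 0 ≤ V x)
    (hVm : ∀ x ∈ Icc (-1:ℝ) 1, V x ≤ Vm)
    (hV : ∀ x ∈ Icc (1/3:ℝ) 1, V x ≤ V (2/3 - x))
    (hi : ∀ x ∈ Icc (1/3:ℝ) 1, u 0 x ≤ u 0 (2/3 - x)) :
    ∀ t ∈ Ico 0 T, ∀ x ∈ Icc (1/3:ℝ) 1, u t x ≤ u t (2/3 - x) := by
  intro t₂ ht₂ x₂ hx₂
  obtain ⟨t₁, -, x₁, -, hU⟩ := S.bdd ht₂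
  obtain ⟨K, hK0, hK⟩ := F_lip ha (u t₁ x₁)
  set k := Vm * K + 1 with hk
  have hx' : ∀ x ∈ Icc (1/3:ℝ) 1, x ∈ Icc (-1:ℝ) 1 ∧ 2/3 - x ∈ Icc (-1:ℝ) 1 := fun x hx =>
    ⟨⟨by linarith [hx.1], hx.2⟩, ⟨by linarith [hx.2], by linarith [hx.1]⟩⟩
  have key := mp1 (D := Icc 0 t₂ ×ˢ Icc (1/3:ℝ) 1) (isCompact_Icc.prod isCompact_Icc)
    (v := fun t x => Real.exp (-k * t) * (u t x - u t (2/3 - x))) ?_ ?_ t₂ x₂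
    ⟨⟨ht₂.1, le_rfl⟩, hx₂⟩
  · have := Real.exp_pos (-k * t₂)
    by_contra hc
    push Not at hc
    have := mul_pos this (sub_pos.2 hc)
    linarith
  · refine ContinuousOn.mul (by fun_prop) (ContinuousOn.sub (S.cont.mono ?_)
      (S.cont.comp (f := fun q : ℝ × ℝ => (q.1, 2/3 - q.2)) (by fun_prop) ?_))
    · rintro q ⟨h1, h2⟩
      exact ⟨⟨h1.1, h1.2.trans_lt ht₂.2⟩, (hx' _ h2).1⟩
    · rintro q ⟨h1, h2⟩
      exact ⟨⟨h1.1, h1.2.trans_lt ht₂.2⟩, (hx' _ h2).2⟩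
  · rintro t x ⟨ht, hx⟩ hpos
    simp only at ht hx
    have he := Real.exp_pos (-k * t)
    have hw : 0 < u t x - u t (2/3 - x) := (mul_pos_iff_of_pos_left he).1 hpos
    have htT : t < T := ht.2.trans_lt ht₂.2
    have ht0 : 0 < t := by
      rcases ht.1.eq_or_lt with h | h
      · subst h; linarith [hi x hx]
      · exact h
    have hx1 : 1/3 < x := by
      rcases hx.1.eq_or_lt with h | h
      · subst h; norm_num at hw
      · exact h
    have hx2 : x < 1 := by
      rcases hx.2.eq_or_lt with h | h
      · rw [h, (S.bc t ⟨ht.1, htT⟩).2] at hw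
        linarith [S.nonneg t ⟨ht.1, htT⟩ (2/3-1) (by norm_num)]
      · exact h
    refine ⟨?_, ?_, ?_⟩
    · filter_upwards [Ioo_mem_nhdsLT ht0] with s hs
      exact ⟨⟨hs.1.le, hs.2.le.trans ht.2⟩, hx⟩
    · filter_upwards [Ioo_mem_nhds hx1 hx2] with y hy
      exact ⟨ht, ⟨hy.1.le, hy.2.le⟩⟩
    · obtain ⟨ut, uxx, h1, h2, h3⟩ := S.eqn t ⟨ht0, htT⟩ x ⟨by linarith, hx2⟩
      obtain ⟨ut', uxx', h1', h2', h3'⟩ := S.eqn t ⟨ht0, htT⟩ (2/3 - x) ⟨by linarith, by linarith⟩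
      have hex : HasDerivAt (fun s : ℝ => Real.exp (-k * s)) (Real.exp (-k * t) * (-k)) t := by
        have := ((hasDerivAt_id t).const_mul (-k)).exp
        simpa using this
      refine ⟨_, _, hex.mul (h1.sub h1'), (h2.sub (h2'.reflect (2/3))).const_mul _, ?_⟩
      have hu1 := S.nonneg t ⟨ht.1, htT⟩ _ (hx' x hx).2
      have e1 := hK _ _ hu1 (sub_pos.1 hw).le (hU t ht x (hx' x hx).1)
      have e2 := mul_le_mul_of_nonneg_right (hV x hx) (F_nonneg (a := a) hu1)
      have e3 := hV0 x (hx' x hx).1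
      have e4 := hVm x (hx' x hx).1
      have e5 := mul_le_mul_of_nonneg_left e1 e3
      have e6 : V x * (K * (u t x - u t (2/3 - x))) ≤ Vm * (K * (u t x - u t (2/3 - x))) :=
        mul_le_mul_of_nonneg_right e4 (mul_nonneg hK0 hw.le)
      have e7 : ut - ut' - (uxx - uxx') < k * (u t x - u t (2/3 - x)) := by
        rw [h3, h3', hk]
        nlinarith
      have e8 := mul_lt_mul_of_pos_left e7 he
      nlinarith


lemma D2_const_sub_quad (A p q r x : ℝ) :
    D2 (fun z => A * (p + q * z + r * z ^ 2)) (A * (2 * r)) x := by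
  refine ⟨fun z => A * (q + r * (2 * z)), Eventually.of_forall fun y => ?_, ?_⟩
  · have := ((((hasDerivAt_id y).const_mul q).const_add p).add
      (((hasDerivAt_id y).pow 2).const_mul r)).const_mul A
    refine HasDerivAt.congr_deriv this ?_
    simp only [id]; ring
  · have := ((((hasDerivAt_id x).const_mul 2).const_mul r).const_add q).const_mul A
    refine HasDerivAt.congr_deriv this ?_
    ring

/-- No blow-up shortly after a time where the solution is bounded by `exp L - 1`. -/
lemma no_blow {a T : ℝ} {V : ℝ → ℝ} {u : ℝ → ℝ → ℝ} (ha : 1 < a) (S : Sol a T V u) {Vm : ℝ}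
    (hVm0 : 0 < Vm)
    (hV0 : ∀ x ∈ Icc (-1:ℝ) 1, 0 ≤ V x)
    (hVm : ∀ x ∈ Icc (-1:ℝ) 1, V x ≤ Vm) {t₀ L : ℝ} (ht₀ : t₀ ∈ Ico 0 T) (hL : 0 < L)
    (hu : ∀ x ∈ Icc (-1:ℝ) 1, u t₀ x ≤ Real.exp L - 1)
    (hblow : ∀ M : ℝ, ∀ δ > 0, ∃ t, T - δ < t ∧ t < T ∧ ∃ x ∈ Icc (-1:ℝ) 1, M < u t x) :
    L < Vm * (2 * L) ^ a * (T - t₀) := by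
  by_contra hc
  push Not at hc
  set k := Vm * (2 * L) ^ a with hk
  have hk0 : 0 < k := by positivity
  obtain ⟨t₂, h1, h2, x₂, hx₂, h3⟩ := hblow (Real.exp (2 * L)) (T - t₀) (by linarith [ht₀.2])
  have ht₂ : t₂ ∈ Ico 0 T := ⟨by linarith [ht₀.1], h2⟩
  have hy : ∀ t ∈ Icc t₀ t₂, L ≤ L + k * (t - t₀) ∧ L + k * (t - t₀) ≤ 2 * L := by
    intro t ht
    have e1 : 0 ≤ k * (t - t₀) := mul_nonneg hk0.le (by linarith [ht.1])
    have e2 : k * (t - t₀) ≤ k * (T - t₀) := mul_le_mul_of_nonneg_left (by linarith [ht.2]) hk0.le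
    constructor <;> linarith
  obtain ⟨t₁, -, x₁, -, hU⟩ := S.bdd ht₂
  obtain ⟨K, hK0, hK⟩ := F_lip ha (u t₁ x₁)
  set r := Vm * K + 1 with hr
  have key := mp1 (D := Icc t₀ t₂ ×ˢ Icc (-1:ℝ) 1) (isCompact_Icc.prod isCompact_Icc)
    (v := fun t x => Real.exp (-r * t) * (u t x - (Real.exp (L + k * (t - t₀)) - 1))) ?_ ?_ t₂ x₂
    ⟨⟨by linarith, le_rfl⟩, hx₂⟩
  · have e1 := Real.exp_pos (-r * t₂)
    have e2 : Real.exp (L + k * (t₂ - t₀)) ≤ Real.exp (2 * L) :=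
      Real.exp_le_exp.2 (hy t₂ ⟨by linarith, le_rfl⟩).2
    have := mul_pos e1 (by linarith : 0 < u t₂ x₂ - (Real.exp (L + k * (t₂ - t₀)) - 1))
    linarith
  · refine ContinuousOn.mul (by fun_prop) (ContinuousOn.sub (S.cont.mono ?_) (by fun_prop))
    rintro q ⟨h1, h2⟩
    exact ⟨⟨ht₀.1.trans h1.1, h1.2.trans_lt ht₂.2⟩, h2⟩
  · rintro t x ⟨ht, hx⟩ hpos
    simp only at ht hx
    have he := Real.exp_pos (-r * t)
    have hw := (mul_pos_iff_of_pos_left he).1 hpos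
    have htT : t < T := ht.2.trans_lt ht₂.2
    have htn : 0 ≤ t := ht₀.1.trans ht.1
    have hyt := hy t ht
    have hZ0 : 0 ≤ Real.exp (L + k * (t - t₀)) - 1 := by
      have := Real.add_one_le_exp (L + k * (t - t₀))
      linarith
    have ht0 : t₀ < t := by
      rcases ht.1.eq_or_lt with h | h
      · subst h; simp at hw; linarith [hu x hx]
      · exact h
    have hx1 : -1 < x := by
      rcases hx.1.eq_or_lt with h | h
      · rw [← h, (S.bc t ⟨htn, htT⟩).1] at hw
        linarith
      · exact h
    have hx2 : x < 1 := by
      rcases hx.2.eq_or_lt with h | h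
      · rw [h, (S.bc t ⟨htn, htT⟩).2] at hw
        linarith
      · exact h
    refine ⟨?_, ?_, ?_⟩
    · filter_upwards [Ioo_mem_nhdsLT ht0] with s hs
      exact ⟨⟨hs.1.le, hs.2.le.trans ht.2⟩, hx⟩
    · filter_upwards [Ioo_mem_nhds hx1 hx2] with y hy
      exact ⟨ht, ⟨hy.1.le, hy.2.le⟩⟩
    · obtain ⟨ut, uxx, h1, h2, h3⟩ := S.eqn t ⟨ht₀.1.trans_lt ht0, htT⟩ x ⟨hx1, hx2⟩
      have hex : HasDerivAt (fun s : ℝ => Real.exp (-r * s)) (Real.exp (-r * t) * (-r)) t := by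
        have := ((hasDerivAt_id t).const_mul (-r)).exp
        simpa using this
      have hZ : HasDerivAt (fun s : ℝ => Real.exp (L + k * (s - t₀)) - 1)
          (Real.exp (L + k * (t - t₀)) * k) t := by
        have := (((((hasDerivAt_id t).sub_const t₀).const_mul k).const_add L).exp).sub_const 1
        simpa using this
      have hD : D2 (fun _ : ℝ => Real.exp (L + k * (t - t₀)) - 1) 0 x :=
        ⟨fun _ => 0, Eventually.of_forall fun y => hasDerivAt_const _ _, hasDerivAt_const _ _⟩
      refine ⟨_, _, hex.mul (h1.sub hZ), (h2.sub hD).const_mul _, ?_⟩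
      set Y := L + k * (t - t₀) with hY
      have e1 := hK _ _ hZ0 (sub_pos.1 hw).le (hU t ⟨htn, ht.2⟩ x hx)
      have e2 : F a (Real.exp Y - 1) ≤ Real.exp Y * (2 * L) ^ a := by
        unfold F
        have : Real.log (1 + (Real.exp Y - 1)) = Y := by
          rw [add_sub_cancel, Real.log_exp]
        rw [this]
        have hY0 : 0 ≤ Y := by linarith
        exact mul_le_mul (by linarith) (Real.rpow_le_rpow hY0 hyt.2 (by linarith))
          (Real.rpow_nonneg hY0 _) (Real.exp_pos _).le
      have e3 := hV0 x hx
      have e4 := hVm x hx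
      have e5 := mul_le_mul_of_nonneg_left e1 e3
      have e6 : V x * (K * (u t x - (Real.exp Y - 1))) ≤ Vm * (K * (u t x - (Real.exp Y - 1))) :=
        mul_le_mul_of_nonneg_right e4 (mul_nonneg hK0 hw.le)
      have e9 : V x * F a (Real.exp Y - 1) ≤ Real.exp Y * k := by
        calc V x * F a (Real.exp Y - 1) ≤ Vm * (Real.exp Y * (2 * L) ^ a) :=
              mul_le_mul e4 e2 (F_nonneg hZ0) hVm0.le
          _ = Real.exp Y * k := by rw [hk]; ring
      have e7 : ut - Real.exp Y * k - (uxx - 0) < r * (u t x - (Real.exp Y - 1)) := by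
        rw [h3, hr]
        nlinarith
      have e8 := mul_lt_mul_of_pos_left e7 he
      nlinarith

/-- Width of the peak at a record time, by doubling the variables. -/
lemma peak {a T : ℝ} {V : ℝ → ℝ} {u : ℝ → ℝ → ℝ} (ha : 1 < a) (hT : 0 < T)
    (S : Sol a T V u) {Vm : ℝ} (hVm0 : 0 < Vm)
    (hV0 : ∀ x ∈ Icc (-1:ℝ) 1, 0 ≤ V x)
    (hVm : ∀ x ∈ Icc (-1:ℝ) 1, V x ≤ Vm) {t₀ x₀ M δ : ℝ} (ht₀ : t₀ ∈ Ioo (T / 2) T)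
    (hx₀ : x₀ ∈ Icc (-1/3:ℝ) (1/3)) (hM : 0 < M) (hux : u t₀ x₀ = M)
    (hu : ∀ t ∈ Icc 0 t₀, ∀ x ∈ Icc (-1:ℝ) 1, u t x ≤ M) (hδ : 0 < δ) (hδ3 : δ ≤ 1/3)
    (hδ' : 2 / T + 18 + Vm * Real.log (1 + M) ^ a < 4 / δ ^ 2) :
    ∀ y ∈ Icc (x₀ - δ / 4) x₀, M / 2 ≤ u t₀ y := by
  intro y₀ hy₀
  set D : Set (ℝ × ℝ × ℝ) := {q | q.1 ∈ Icc (t₀ - T / 2) t₀ ∧ q.2.1 ∈ Icc (x₀ - 1/3) (x₀ + 1/3) ∧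
    q.2.2 ∈ Icc (q.2.1 - δ) q.2.1} with hDdef
  have hDc : IsCompact D := by
    have hK : IsCompact (Icc (t₀ - T / 2) t₀ ×ˢ (Icc (x₀ - 1/3) (x₀ + 1/3) ×ˢ Icc (-1:ℝ) 1)) :=
      isCompact_Icc.prod (isCompact_Icc.prod isCompact_Icc)
    refine hK.of_isClosed_subset ?_ ?_
    · have c1 : IsClosed {q : ℝ × ℝ × ℝ | q.1 ∈ Icc (t₀ - T / 2) t₀} :=
        isClosed_Icc.preimage continuous_fst
      have c2 : IsClosed {q : ℝ × ℝ × ℝ | q.2.1 ∈ Icc (x₀ - 1/3) (x₀ + 1/3)} :=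
        isClosed_Icc.preimage (continuous_fst.comp continuous_snd)
      have c3 : IsClosed {q : ℝ × ℝ × ℝ | q.2.1 - δ ≤ q.2.2} :=
        isClosed_le (by fun_prop) (by fun_prop)
      have c4 : IsClosed {q : ℝ × ℝ × ℝ | q.2.2 ≤ q.2.1} :=
        isClosed_le (by fun_prop) (by fun_prop)
      exact c1.inter (c2.inter (c3.inter c4))
    · rintro ⟨t, x, y⟩ ⟨h1, h2, h3⟩
      simp only at h1 h2 h3
      exact ⟨h1, h2, ⟨by linarith [h2.1, h3.1, hx₀.1], by linarith [h2.2, h3.2, hx₀.2]⟩⟩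
  have hin : ∀ t x y, (t, x, y) ∈ D → t ∈ Icc 0 t₀ ∧ t ∈ Ico 0 T ∧ x ∈ Icc (-1:ℝ) 1 ∧
      y ∈ Icc (-1:ℝ) 1 := by
    rintro t x y ⟨h1, h2, h3⟩
    simp only at h1 h2 h3
    exact ⟨⟨by linarith [h1.1, ht₀.1], h1.2⟩, ⟨by linarith [h1.1, ht₀.1], h1.2.trans_lt ht₀.2⟩,
      ⟨by linarith [h2.1, hx₀.1], by linarith [h2.2, hx₀.2]⟩,
      ⟨by linarith [h2.1, h3.1, hx₀.1], by linarith [h2.2, h3.2, hx₀.2]⟩⟩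
  have key := mp2 hDc
    (v := fun t x y => u t x - u t y - M * (2 / T * (t₀ - t) + 9 * (x - x₀) ^ 2 +
      (2 * (x - y) / δ - (x - y) ^ 2 / δ ^ 2))) ?_ ?_ t₀ x₀ y₀
      ⟨⟨by linarith, le_rfl⟩, ⟨by linarith, by linarith⟩, ⟨by simp only; linarith [hy₀.1], hy₀.2⟩⟩
  · simp only [sub_self] at key
    have e1 : 0 ≤ (x₀ - y₀) ^ 2 / δ ^ 2 := by positivity
    have e2 : 2 * (x₀ - y₀) / δ ≤ 1 / 2 := by
      rw [div_le_iff₀ hδ]; linarith [hy₀.1]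
    have e3 := mul_le_mul_of_nonneg_left (by nlinarith : (2 / T * 0 + 9 * 0 ^ 2 +
      (2 * (x₀ - y₀) / δ - (x₀ - y₀) ^ 2 / δ ^ 2)) ≤ 1 / 2) hM.le
    rw [hux] at key
    linarith
  · refine ContinuousOn.sub (ContinuousOn.sub
      (S.cont.comp (f := fun q : ℝ × ℝ × ℝ => (q.1, q.2.1)) (by fun_prop) ?_)
      (S.cont.comp (f := fun q : ℝ × ℝ × ℝ => (q.1, q.2.2)) (by fun_prop) ?_)) (by fun_prop)
    · rintro ⟨t, x, y⟩ hq
      have := hin t x y hq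
      exact ⟨this.2.1, this.2.2.1⟩
    · rintro ⟨t, x, y⟩ hq
      have := hin t x y hq
      exact ⟨this.2.1, this.2.2.2⟩
  · rintro t x y hq hpos
    obtain ⟨i1, i2, i3, i4⟩ := hin t x y hq
    obtain ⟨h1, h2, h3⟩ := hq
    simp only at h1 h2 h3
    have hz : u t x - u t y ≤ M := by linarith [hu t i1 x i3, S.nonneg t i2 y i4]
    have hP : M * (2 / T * (t₀ - t) + 9 * (x - x₀) ^ 2 +
      (2 * (x - y) / δ - (x - y) ^ 2 / δ ^ 2)) < u t x - u t y := sub_pos.1 hpos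
    have hA : 0 ≤ 2 / T * (t₀ - t) := mul_nonneg (by positivity) (by linarith [h1.2])
    have hB : 0 ≤ 9 * (x - x₀) ^ 2 := by positivity
    have hC : 2 * (x - y) / δ - (x - y) ^ 2 / δ ^ 2 = 1 - ((x - y) / δ - 1) ^ 2 := by
      field_simp; ring
    have hd0 : 0 ≤ (x - y) / δ := div_nonneg (by linarith [h3.2]) hδ.le
    have hd1 : (x - y) / δ ≤ 1 := by rw [div_le_iff₀ hδ]; linarith [h3.1]
    have hC0 : 0 ≤ 1 - ((x - y) / δ - 1) ^ 2 := by nlinarith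
    rw [hC] at hP
    have hlt : 2 / T * (t₀ - t) + 9 * (x - x₀) ^ 2 + (1 - ((x - y) / δ - 1) ^ 2) < 1 := by
      by_contra hc
      push Not at hc
      have := mul_le_mul_of_nonneg_left hc hM.le
      linarith
    have ht1 : t₀ - T / 2 < t := by
      rcases h1.1.eq_or_lt with h | h
      · have : 2 / T * (t₀ - t) = 1 := by rw [← h]; field_simp; ring
        linarith
      · exact h
    have hx1 : x₀ - 1/3 < x := by
      rcases h2.1.eq_or_lt with h | h
      · have : 9 * (x - x₀) ^ 2 = 1 := by rw [← h]; ring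
        linarith
      · exact h
    have hx2 : x < x₀ + 1/3 := by
      rcases h2.2.eq_or_lt with h | h
      · have : 9 * (x - x₀) ^ 2 = 1 := by rw [h]; ring
        linarith
      · exact h
    have hy1 : x - δ < y := by
      rcases h3.1.eq_or_lt with h | h
      · have : (x - y) / δ = 1 := by rw [← h]; field_simp; ring
        rw [this] at hlt
        norm_num at hlt
        linarith
      · exact h
    have hy2 : y < x := by
      rcases h3.2.eq_or_lt with h | h
      · have e1 := mul_nonneg hM.le (add_nonneg (add_nonneg hA hB) hC0)
        rw [h] at hP e1
        linarith
      · exact h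
    have ht0 : 0 < t := by linarith [ht₀.1]
    refine ⟨?_, ?_, ?_, ?_⟩
    · filter_upwards [Ioo_mem_nhdsLT ht1] with s hs
      exact ⟨⟨hs.1.le, hs.2.le.trans h1.2⟩, h2, h3⟩
    · filter_upwards [Ioo_mem_nhds hx1 hx2, Ioo_mem_nhds hy2 (by linarith : x < y + δ)] with z hz hz'
      exact ⟨h1, ⟨hz.1.le, hz.2.le⟩, ⟨by simp only; linarith [hz'.2], hz'.1.le⟩⟩
    · filter_upwards [Ioo_mem_nhds hy1 hy2] with z hz
      exact ⟨h1, h2, ⟨hz.1.le, hz.2.le⟩⟩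
    · obtain ⟨ut, uxx, d1, d2, d3⟩ := S.eqn t ⟨ht0, i2.2⟩ x
        ⟨by linarith [hx₀.1], by linarith [hx₀.2]⟩
      obtain ⟨ut', uxx', d1', d2', d3'⟩ := S.eqn t ⟨ht0, i2.2⟩ y
        ⟨by linarith [hx₀.1], by linarith [hx₀.2]⟩
      have g1 : HasDerivAt (fun s => u s x - u s y - M * (2 / T * (t₀ - s) + 9 * (x - x₀) ^ 2 +
          (2 * (x - y) / δ - (x - y) ^ 2 / δ ^ 2))) (ut - ut' - M * (2 / T * (-1))) t := by
        refine (d1.sub d1').sub (HasDerivAt.const_mul M ?_)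
        refine HasDerivAt.add_const _ (HasDerivAt.add_const _ (HasDerivAt.const_mul _ ?_))
        exact (hasDerivAt_id t).const_sub t₀
      have cst : ∀ (c z : ℝ), D2 (fun _ : ℝ => c) 0 z := fun c z =>
        ⟨fun _ => 0, Eventually.of_forall fun y => hasDerivAt_const _ _, hasDerivAt_const _ _⟩
      have g2 : D2 (fun z => u t z - u t y - M * (2 / T * (t₀ - t) + 9 * (z - x₀) ^ 2 +
          (2 * (z - y) / δ - (z - y) ^ 2 / δ ^ 2))) (uxx - 0 - M * (2 * (9 - 1 / δ ^ 2))) x := by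
        have := (d2.sub (cst (u t y) x)).sub (D2_const_sub_quad M
          (2 / T * (t₀ - t) + 9 * x₀ ^ 2 - 2 * y / δ - y ^ 2 / δ ^ 2)
          (-18 * x₀ + 2 / δ + 2 * y / δ ^ 2) (9 - 1 / δ ^ 2) x)
        convert this using 2 with z
        ring
      have g3 : D2 (fun z => u t x - u t z - M * (2 / T * (t₀ - t) + 9 * (x - x₀) ^ 2 +
          (2 * (x - z) / δ - (x - z) ^ 2 / δ ^ 2))) (0 - uxx' - M * (2 * (- 1 / δ ^ 2))) y := by
        have := ((cst (u t x) y).sub d2').sub (D2_const_sub_quad M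
          (2 / T * (t₀ - t) + 9 * (x - x₀) ^ 2 + 2 * x / δ - x ^ 2 / δ ^ 2)
          (- 2 / δ + 2 * x / δ ^ 2) (- 1 / δ ^ 2) y)
        convert this using 2 with z
        ring
      refine ⟨_, _, _, g1, g2, g3, ?_⟩
      have e1 : V x * F a (u t x) ≤ Vm * (M * Real.log (1 + M) ^ a) :=
        mul_le_mul (hVm x i3) (F_le ha (S.nonneg t i2 x i3) (hu t i1 x i3))
          (F_nonneg (S.nonneg t i2 x i3)) hVm0.le
      have e2 : 0 ≤ V y * F a (u t y) := mul_nonneg (hV0 y i4) (F_nonneg (S.nonneg t i2 y i4))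
      have e3 := mul_lt_mul_of_pos_left hδ' hM
      have e4 : (1:ℝ) / δ ^ 2 = 4 / δ ^ 2 / 4 := by ring
      have e5 : (-1:ℝ) / δ ^ 2 = - (4 / δ ^ 2 / 4) := by ring
      rw [d3, d3', e4, e5]
      nlinarith

/-- Propagation along a moving window. -/
lemma move {a T : ℝ} {V : ℝ → ℝ} {u : ℝ → ℝ → ℝ}
    (S : Sol a T V u)
    (hV0 : ∀ x ∈ Icc (-1:ℝ) 1, 0 ≤ V x) {t₀ t₁ c q ρ A : ℝ} (ht₀ : 0 ≤ t₀) (ht₁ : t₁ ∈ Ico t₀ T)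
    (hρ : 0 < ρ) (hA : 0 < A) (hc0 : |c| + ρ ≤ 1) (hc1 : |c + q * (t₁ - t₀)| + ρ ≤ 1)
    (hu : ∀ y, |y - c| ≤ ρ → A ≤ u t₀ y) :
    A * Real.exp (-(|q| * ρ / 2)) *
      Real.exp (- (Real.pi ^ 2 / (4 * ρ ^ 2) + q ^ 2 / 4 + 1) * (t₁ - t₀)) ≤
      u t₁ (c + q * (t₁ - t₀)) := by
  set κ := Real.pi ^ 2 / (4 * ρ ^ 2) + q ^ 2 / 4 + 1 with hκ
  set B := A * Real.exp (-(|q| * ρ / 2)) with hB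
  have hB0 : 0 < B := by positivity
  set D : Set (ℝ × ℝ) := {p | p.1 ∈ Icc t₀ t₁ ∧ |p.2 - c - q * (p.1 - t₀)| ≤ ρ} with hDdef
  have hin : ∀ t x, (t, x) ∈ D → t ∈ Icc t₀ t₁ ∧ t ∈ Ico 0 T ∧ x ∈ Icc (-1:ℝ) 1 ∧
      (|x - c - q * (t - t₀)| < ρ → x ∈ Ioo (-1:ℝ) 1) := by
    rintro t x ⟨h1, h2⟩
    simp only at h1 h2
    have e : |c + q * (t - t₀)| + ρ ≤ 1 := by
      rcases abs_le.1 (by linarith : |c| ≤ 1 - ρ) with ⟨b1, b2⟩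
      rcases abs_le.1 (by linarith : |c + q * (t₁ - t₀)| ≤ 1 - ρ) with ⟨b3, b4⟩
      have : |c + q * (t - t₀)| ≤ 1 - ρ := by
        rw [abs_le]
        rcases le_total 0 q with hq | hq
        · have m1 := mul_nonneg hq (by linarith [h1.1] : 0 ≤ t - t₀)
          have m2 := mul_nonneg hq (by linarith [h1.2] : 0 ≤ t₁ - t)
          constructor <;> nlinarith
        · have m1 := mul_nonneg (neg_nonneg.2 hq) (by linarith [h1.1] : 0 ≤ t - t₀)
          have m2 := mul_nonneg (neg_nonneg.2 hq) (by linarith [h1.2] : 0 ≤ t₁ - t)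
          constructor <;> nlinarith
      linarith
    rcases abs_le.1 (by linarith : |c + q * (t - t₀)| ≤ 1 - ρ) with ⟨b1, b2⟩
    rcases abs_le.1 h2 with ⟨b3, b4⟩
    refine ⟨h1, ⟨ht₀.trans h1.1, h1.2.trans_lt ht₁.2⟩, ⟨by linarith, by linarith⟩, fun h => ?_⟩
    rcases abs_lt.1 h with ⟨b5, b6⟩
    exact ⟨by linarith, by linarith⟩
  have hDc : IsCompact D := by
    have hK : IsCompact (Icc t₀ t₁ ×ˢ Icc (-1:ℝ) 1) := isCompact_Icc.prod isCompact_Icc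
    refine hK.of_isClosed_subset ?_ ?_
    · have c1 : IsClosed {q : ℝ × ℝ | q.1 ∈ Icc t₀ t₁} := isClosed_Icc.preimage continuous_fst
      have c2 : IsClosed {p : ℝ × ℝ | |p.2 - c - q * (p.1 - t₀)| ≤ ρ} :=
        isClosed_le (by fun_prop) (by fun_prop)
      exact c1.inter c2
    · rintro ⟨t, x⟩ h
      have := hin t x h
      exact ⟨this.1, this.2.2.1⟩
  set ω := Real.pi / (2 * ρ) with hω
  have key := mp1 hDc
    (v := fun t x => B * (Real.exp (-(q / 2) * (x - c - q * (t - t₀)) - κ * (t - t₀)) *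
      Real.cos (ω * (x - c - q * (t - t₀)))) - u t x) ?_ ?_ t₁ (c + q * (t₁ - t₀))
      ⟨⟨ht₁.1, le_rfl⟩, by
        have : c + q * (t₁ - t₀) - c - q * (t₁ - t₀) = 0 := by ring
        simp only [this, abs_zero]
        exact hρ.le⟩
  · have : c + q * (t₁ - t₀) - c - q * (t₁ - t₀) = 0 := by ring
    simp only [this, mul_zero, Real.cos_zero, mul_one, zero_sub] at key
    rw [neg_mul]
    linarith
  · refine ContinuousOn.sub (by fun_prop) (S.cont.mono ?_)
    rintro ⟨t, x⟩ h
    have := hin t x h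
    exact ⟨this.2.1, this.2.2.1⟩
  · intro t x hq hpos
    obtain ⟨i1, i2, i3, i4⟩ := hin t x hq
    obtain ⟨h1, h2⟩ := hq
    simp only at h1 h2
    set y := x - c - q * (t - t₀) with hy
    have hu0 := S.nonneg t i2 x i3
    have hlt : |y| < ρ := by
      rcases h2.eq_or_lt with h | h
      · have : Real.cos (ω * y) = 0 := by
          rw [← Real.cos_abs, abs_mul, h, hω, abs_of_pos (by positivity)]
          have : Real.pi / (2 * ρ) * ρ = Real.pi / 2 := by field_simp
          rw [this, Real.cos_pi_div_two]
        simp only [this, mul_zero] at hpos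
        linarith
      · exact h
    have ht0 : t₀ < t := by
      rcases h1.1.eq_or_lt with h | h
      · subst h
        have ex : Real.exp (-(|q| * ρ / 2)) * Real.exp (-(q / 2) * y - κ * (t₀ - t₀)) ≤ 1 := by
          rw [← Real.exp_add, Real.exp_le_one_iff]
          have m1 : |q * y| ≤ |q| * ρ := by
            rw [abs_mul]; exact mul_le_mul_of_nonneg_left h2 (abs_nonneg _)
          have m2 := neg_abs_le (q * y)
          nlinarith
        have hyc : |x - c| ≤ ρ := by
          have : y = x - c := by rw [hy]; ring
          rw [← this]; exact h2
        have h3 := hu x hyc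
        have h4 := Real.cos_le_one (ω * y)
        have h5 : B * (Real.exp (-(q / 2) * y - κ * (t₀ - t₀)) * Real.cos (ω * y)) ≤ A := by
          calc B * (Real.exp (-(q / 2) * y - κ * (t₀ - t₀)) * Real.cos (ω * y))
              ≤ B * (Real.exp (-(q / 2) * y - κ * (t₀ - t₀)) * 1) := by gcongr
            _ = A * (Real.exp (-(|q| * ρ / 2)) * Real.exp (-(q / 2) * y - κ * (t₀ - t₀))) := by
                rw [hB]; ring
            _ ≤ A * 1 := by gcongr
            _ = A := mul_one A
        have := sub_pos.1 hpos
        linarith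
      · exact h
    have hxI := i4 hlt
    refine ⟨?_, ?_, ?_⟩
    · have hcont : ContinuousAt (fun s => |x - c - q * (s - t₀)|) t := by fun_prop
      have hev := (hcont.eventually_lt_const hlt).filter_mono (nhdsWithin_le_nhds (s := Iio t))
      filter_upwards [Ioo_mem_nhdsLT ht0, hev] with s hs hs'
      exact ⟨⟨hs.1.le, hs.2.le.trans h1.2⟩, hs'.le⟩
    · have hcont : ContinuousAt (fun z => |z - c - q * (t - t₀)|) x := by fun_prop
      filter_upwards [hcont.eventually_lt_const hlt] with z hz
      exact ⟨h1, hz.le⟩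
    · obtain ⟨ut, uxx, d1, d2, d3⟩ := S.eqn t ⟨ht₀.trans_lt ht0, i2.2⟩ x hxI
      set E := Real.exp (-(q / 2) * y - κ * (t - t₀)) with hE
      have hyt : HasDerivAt (fun s => x - c - q * (s - t₀)) (-q) t := by
        have := ((((hasDerivAt_id t).sub_const t₀).const_mul q).const_sub (x - c))
        simpa using this
      have hyx : ∀ z, HasDerivAt (fun z => z - c - q * (t - t₀)) 1 z := fun z =>
        ((hasDerivAt_id z).sub_const c).sub_const _
      have hEt : HasDerivAt (fun s => Real.exp (-(q / 2) * (x - c - q * (s - t₀)) - κ * (s - t₀)))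
          (E * (-(q / 2) * (-q) - κ)) t := by
        have h := ((hyt.const_mul (-(q / 2))).sub
          (((hasDerivAt_id t).sub_const t₀).const_mul κ)).exp
        refine HasDerivAt.congr_deriv h ?_
        rw [mul_one]; rfl
      have hCt : HasDerivAt (fun s => Real.cos (ω * (x - c - q * (s - t₀))))
          (-Real.sin (ω * y) * (ω * (-q))) t := (hyt.const_mul ω).cos
      have hEx : ∀ z, HasDerivAt (fun z => Real.exp (-(q / 2) * (z - c - q * (t - t₀)) -
          κ * (t - t₀))) (Real.exp (-(q / 2) * (z - c - q * (t - t₀)) - κ * (t - t₀)) *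
          (-(q / 2) * 1)) z := fun z => (((hyx z).const_mul (-(q / 2))).sub_const _).exp
      have hCx : ∀ z, HasDerivAt (fun z => Real.cos (ω * (z - c - q * (t - t₀))))
          (-Real.sin (ω * (z - c - q * (t - t₀))) * (ω * 1)) z := fun z =>
        ((hyx z).const_mul ω).cos
      have hSx : ∀ z, HasDerivAt (fun z => Real.sin (ω * (z - c - q * (t - t₀))))
          (Real.cos (ω * (z - c - q * (t - t₀))) * (ω * 1)) z := fun z =>
        ((hyx z).const_mul ω).sin
      have hψ : D2 (fun z => Real.exp (-(q / 2) * (z - c - q * (t - t₀)) - κ * (t - t₀)) *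
          Real.cos (ω * (z - c - q * (t - t₀))))
          (E * ((q ^ 2 / 4 - ω ^ 2) * Real.cos (ω * y) + q * ω * Real.sin (ω * y))) x := by
        refine ⟨_, Eventually.of_forall fun z => (hEx z).mul (hCx z), ?_⟩
        have h := (((hEx x).mul_const (-(q / 2) * 1)).mul (hCx x)).add
          ((hEx x).mul ((hSx x).neg.mul_const (ω * 1)))
        refine HasDerivAt.congr_deriv h ?_
        change E * (-(q / 2) * 1) * (-(q / 2) * 1) * Real.cos (ω * y) +
          E * (-(q / 2) * 1) * (-Real.sin (ω * y) * (ω * 1)) +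
          (E * (-(q / 2) * 1) * (-Real.sin (ω * y) * (ω * 1)) +
          E * (-(Real.cos (ω * y) * (ω * 1)) * (ω * 1))) = _
        ring
      refine ⟨_, _, ((hEt.mul hCt).const_mul B).sub d1, (hψ.const_mul B).sub d2, ?_⟩
      have hcos : 0 < Real.cos (ω * y) := by
        have hs : 0 < B * (E * Real.cos (ω * y)) := by linarith [sub_pos.1 hpos]
        have := (mul_pos_iff_of_pos_left hB0).1 hs
        exact (mul_pos_iff_of_pos_left (Real.exp_pos _)).1 this
      have e1 : 0 ≤ V x * F a (u t x) := mul_nonneg (hV0 x i3) (F_nonneg hu0)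
      have e2 : κ = ω ^ 2 + q ^ 2 / 4 + 1 := by
        rw [hκ, hω]; congr 2; rw [div_pow]; congr 1; ring
      have e3 : 0 < B * (E * Real.cos (ω * y)) := by positivity
      simp only [← hy, ← hE]
      rw [d3]
      have e4 : B * (E * (-(q / 2) * -q - κ) * Real.cos (ω * y) +
          E * (-Real.sin (ω * y) * (ω * -q))) =
          B * (E * ((q ^ 2 / 4 - ω ^ 2) * Real.cos (ω * y) + q * ω * Real.sin (ω * y)))
          - B * (E * Real.cos (ω * y)) := by
        rw [e2]; ring
      linarith

lemma asym {a : ℝ} (ha2 : a < 2) (Q C N : ℝ) :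
    ∃ L₀ : ℝ, 1 ≤ L₀ ∧ ∀ L ≥ L₀, N ≤ 1 / 4 * Real.exp (3 / 4 * L - C - Q * L ^ (a - 1)) := by
  have h1 : Tendsto (fun L : ℝ => Q * L ^ (-(2 - a))) atTop (𝓝 (Q * 0)) :=
    (tendsto_rpow_neg_atTop (by linarith)).const_mul Q
  rw [mul_zero] at h1
  have h2 := h1.eventually_le_const (by norm_num : (0:ℝ) < 1 / 4)
  obtain ⟨L₁, hL₁⟩ := (h2.and (eventually_ge_atTop (max 1 (8 * N + 2 * C)))).exists_forall_of_atTop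
  refine ⟨max 1 L₁, le_max_left _ _, fun L hL => ?_⟩
  obtain ⟨e1, e2⟩ := hL₁ L ((le_max_right _ _).trans hL)
  have hLp : 0 < L := lt_of_lt_of_le one_pos ((le_max_left _ _).trans hL)
  have e3 : L ^ (a - 1) = L ^ (-(2 - a)) * L := by
    rw [← Real.rpow_add_one hLp.ne']; congr 1; ring
  have e4 : Q * L ^ (a - 1) ≤ L / 4 := by
    rw [e3]; nlinarith
  have e5 := Real.add_one_le_exp (3 / 4 * L - C - Q * L ^ (a - 1))
  have e6 := (le_max_right _ _).trans e2
  linarith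

lemma record {a T : ℝ} {V : ℝ → ℝ} {u : ℝ → ℝ → ℝ} (hT : 0 < T) (S : Sol a T V u)
    (hR : ∀ t ∈ Ico 0 T, ∀ x ∈ Icc (1/3:ℝ) 1, u t x ≤ u t (2/3 - x))
    (hL : ∀ t ∈ Ico 0 T, ∀ x ∈ Icc (-1:ℝ) (-1/3), u t x ≤ u t (-2/3 - x))
    (hblow : ∀ M : ℝ, ∀ δ > 0, ∃ t, T - δ < t ∧ t < T ∧ ∃ x ∈ Icc (-1:ℝ) 1, M < u t x)
    (N : ℝ) : ∃ t₀ ∈ Ioo (T / 2) T, ∃ x₀ ∈ Icc (-1/3:ℝ) (1/3), N < u t₀ x₀ ∧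
      ∀ t ∈ Icc 0 t₀, ∀ x ∈ Icc (-1:ℝ) 1, u t x ≤ u t₀ x₀ := by
  obtain ⟨t₁, -, x₁, -, hU⟩ := S.bdd (t₀ := T / 2) ⟨by linarith, by linarith⟩
  obtain ⟨t₂, h1, h2, x₂, hx₂, h3⟩ := hblow (max N (u t₁ x₁)) (T / 2) (by linarith)
  obtain ⟨t₀, ht₀, x₀, hx₀, hm⟩ := S.bdd (t₀ := t₂) ⟨by linarith, h2⟩
  have h4 := hm t₂ ⟨by linarith, le_rfl⟩ x₂ hx₂
  have h5 : T / 2 < t₀ := by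
    by_contra hc
    push Not at hc
    have := hU t₀ ⟨ht₀.1, hc⟩ x₀ hx₀
    linarith [le_max_right N (u t₁ x₁)]
  have h6 : N < u t₀ x₀ := by linarith [le_max_left N (u t₁ x₁)]
  have htT : t₀ ∈ Ico 0 T := ⟨ht₀.1, ht₀.2.trans_lt h2⟩
  have : ∃ x ∈ Icc (-1/3:ℝ) (1/3), u t₀ x₀ ≤ u t₀ x := by
    rcases le_or_gt x₀ (1/3) with h | h
    · rcases le_or_gt (-1/3) x₀ with h' | h'
      · exact ⟨x₀, ⟨h', h⟩, le_rfl⟩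
      · exact ⟨-2/3 - x₀, ⟨by linarith, by linarith [hx₀.1]⟩, hL t₀ htT x₀ ⟨hx₀.1, h'.le⟩⟩
    · exact ⟨2/3 - x₀, ⟨by linarith [hx₀.2], by linarith⟩, hR t₀ htT x₀ ⟨h.le, hx₀.2⟩⟩
  obtain ⟨x, hx, hle⟩ := this
  exact ⟨t₀, ⟨h5, htT.2⟩, x, hx, by linarith, fun t ht y hy =>
    (hm t ⟨ht.1, ht.2.trans ht₀.2⟩ y hy).trans hle⟩

set_option maxHeartbeats 1000000 in
lemma big {a T : ℝ} {V : ℝ → ℝ} {u : ℝ → ℝ → ℝ} (ha : 1 < a) (ha2 : a < 2) (hT : 0 < T)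
    (S : Sol a T V u) {Vm : ℝ} (hVm1 : 1 ≤ Vm)
    (hV0 : ∀ x ∈ Icc (-1:ℝ) 1, 0 ≤ V x)
    (hVm : ∀ x ∈ Icc (-1:ℝ) 1, V x ≤ Vm)
    (hR : ∀ t ∈ Ico 0 T, ∀ x ∈ Icc (1/3:ℝ) 1, u t x ≤ u t (2/3 - x))
    (hL : ∀ t ∈ Ico 0 T, ∀ x ∈ Icc (-1:ℝ) (-1/3), u t x ≤ u t (-2/3 - x))
    (hblow : ∀ M : ℝ, ∀ δ > 0, ∃ t, T - δ < t ∧ t < T ∧ ∃ x ∈ Icc (-1:ℝ) 1, M < u t x)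
    {R : ℝ} (hR1 : R < 1) (N : ℝ) : ∃ t₁ ∈ Ioo 0 T, ∀ y, |y| ≤ R → N ≤ u t₁ y := by
  have hVm0 : 0 < Vm := by linarith
  set η := 1 - R with hη
  have hη0 : 0 < η := by linarith
  set C₁ := 2 / T + 36 + 1 / η ^ 2 with hC₁
  have hTp : 0 < 2 / T := by positivity
  have hηp : 0 < 1 / η ^ 2 := by positivity
  have hC₁0 : 36 < C₁ := by linarith
  obtain ⟨L₀, hL₀, hasym⟩ := asym ha2 (320 * Vm) (40 * C₁ + 1) N
  obtain ⟨t₀, ht₀, x₀, hx₀, hM, hmax⟩ := record hT S hR hL hblow (Real.exp L₀)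
  set M := u t₀ x₀ with hMdef
  have hM0 : 0 < M := (Real.exp_pos _).trans hM
  set L := Real.log (1 + M) with hLdef
  have hexpL : Real.exp L = 1 + M := Real.exp_log (by linarith)
  have hLL : L₀ ≤ L := by
    rw [hLdef, Real.le_log_iff_exp_le (by linarith)]; linarith
  have hL1 : 1 ≤ L := hL₀.trans hLL
  have hLp : 0 < L := by linarith
  have hLa : 0 < L ^ a := Real.rpow_pos_of_pos hLp _
  set P := C₁ + Vm * L ^ a with hP
  have hVL : 0 < Vm * L ^ a := by positivity
  have hP0 : 0 < P := by linarith
  set δ := 2 / Real.sqrt P with hδ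
  have hδ0 : 0 < δ := by positivity
  have hδ2 : 4 / δ ^ 2 = P := by
    rw [hδ, div_pow, Real.sq_sqrt hP0.le]; field_simp; norm_num
  have hδP : δ ^ 2 * P = 4 := by
    rw [← hδ2]; field_simp
  have hδ3 : δ ≤ 1 / 3 := by
    by_contra hc
    push Not at hc
    have : (1/3:ℝ) ^ 2 < δ ^ 2 := by gcongr
    nlinarith
  have hδη : δ ≤ 2 * η := by
    by_contra hc
    push Not at hc
    have h1 : (2 * η) ^ 2 < δ ^ 2 := by gcongr
    have h2 : 1 / η ^ 2 ≤ P := by linarith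
    have h3 : η ^ 2 * (1 / η ^ 2) = 1 := by field_simp
    have h4 : 0 < η ^ 2 := by positivity
    have h5 := mul_le_mul_of_nonneg_left h2 h4.le
    have h6 := mul_lt_mul_of_pos_right h1 hP0
    nlinarith
  have hpk := peak ha hT S hVm0 hV0 hVm ht₀ hx₀ hM0 rfl hmax hδ0 hδ3
    (by rw [hδ2, hP, hC₁]; linarith)
  have hnb := no_blow ha S hVm0 hV0 hVm (t₀ := t₀) (L := L) ⟨by linarith [ht₀.1], ht₀.2⟩ hLp
    (fun x hx => by rw [hexpL]; linarith [hmax t₀ ⟨by linarith [ht₀.1], le_rfl⟩ x hx]) hblow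
  -- the travel time
  set s := L ^ (1 - a) / (160 * Vm) with hs
  have hL1a : 0 < L ^ (1 - a) := Real.rpow_pos_of_pos hLp _
  have hs0 : 0 < s := by positivity
  have hmulL : L ^ (1 - a) * L ^ a = L := by
    rw [← Real.rpow_add hLp, sub_add_cancel, Real.rpow_one]
  have hsL : s * (Vm * L ^ a) = L / 160 := by
    rw [hs, div_mul_eq_mul_div, div_eq_div_iff (by positivity) (by norm_num)]
    linear_combination 160 * Vm * hmulL
  have hL1a1 : L ^ (1 - a) ≤ 1 := Real.rpow_le_one_of_one_le_of_nonpos hL1 (by linarith)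
  have hs1 : s ≤ 1 := by
    rw [hs, div_le_one (by positivity)]; linarith
  have hsT : t₀ + s < T := by
    have e1 : (2 * L) ^ a ≤ 4 * L ^ a := by
      rw [Real.mul_rpow (by norm_num) hLp.le]
      have : (2:ℝ) ^ a ≤ 2 ^ (2:ℝ) := Real.rpow_le_rpow_of_exponent_le (by norm_num) ha2.le
      have h4 : (2:ℝ) ^ (2:ℝ) = 4 := by norm_num
      rw [h4] at this
      gcongr
    by_contra hc
    push Not at hc
    have e2 : Vm * (2 * L) ^ a * (T - t₀) ≤ Vm * (4 * L ^ a) * s :=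
      mul_le_mul (mul_le_mul_of_nonneg_left e1 hVm0.le) (by linarith) (by linarith [ht₀.2])
        (by positivity)
    nlinarith
  have hsinv : 2 / s = 320 * Vm * L ^ (a - 1) := by
    have : L ^ (1 - a) * L ^ (a - 1) = 1 := by
      rw [← Real.rpow_add hLp]; simp
    rw [div_eq_iff hs0.ne', hs]
    field_simp
    linear_combination (-320) * this
  refine ⟨t₀ + s, ⟨by linarith [ht₀.1], hsT⟩, fun y hy => ?_⟩
  set c := x₀ - δ / 8 with hc
  set q := (y - c) / s with hq
  have hqs : q * s = y - c := by rw [hq]; field_simp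
  have hcb : |c| ≤ 1/3 + δ / 8 := by
    rw [abs_le]; constructor <;> linarith [hx₀.1, hx₀.2]
  have hmv := move S hV0 (t₀ := t₀) (t₁ := t₀ + s) (c := c) (q := q) (ρ := δ / 8) (A := M / 2)
    (by linarith [ht₀.1]) ⟨by linarith, hsT⟩ (by linarith) (by linarith) (by linarith)
    (by
      have : c + q * (t₀ + s - t₀) = y := by rw [add_sub_cancel_left, hqs]; ring
      rw [this]; linarith)
    (fun z hz => hpk z (by
      rcases abs_le.1 hz with ⟨b1, b2⟩
      exact ⟨by linarith, by linarith⟩))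
  have hyy : c + q * (t₀ + s - t₀) = y := by rw [add_sub_cancel_left, hqs]; ring
  rw [hyy, add_sub_cancel_left, mul_assoc, ← Real.exp_add] at hmv
  refine le_trans ?_ hmv
  have hqa : |q| * s ≤ 2 := by
    have : |q| * s = |y - c| := by rw [← hqs, abs_mul, abs_of_pos hs0]
    rw [this]
    have := abs_sub y c
    linarith
  have hqi : |q| ≤ 2 / s := by rw [le_div_iff₀ hs0]; exact hqa
  have hb1 : |q| * (δ / 8) / 2 ≤ 1 / s := by
    have : |q| * (δ / 8) ≤ |q| * 1 := mul_le_mul_of_nonneg_left (by linarith) (abs_nonneg q)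
    have h2 : 1 / s = 2 / s / 2 := by ring
    linarith
  have hb2 : q ^ 2 / 4 * s ≤ 1 / s := by
    rw [le_div_iff₀ hs0, ← sq_abs]
    have h7 : (|q| * s) ^ 2 ≤ 2 ^ 2 := pow_le_pow_left₀ (by positivity) hqa 2
    have h8 : |q| ^ 2 / 4 * s * s = (|q| * s) ^ 2 / 4 := by ring
    rw [h8]
    linarith
  have hpi : Real.pi ^ 2 ≤ 10 := by nlinarith [Real.pi_pos, Real.pi_lt_d2]
  have hb3 : Real.pi ^ 2 / (4 * (δ / 8) ^ 2) ≤ 40 * P := by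
    have : Real.pi ^ 2 / (4 * (δ / 8) ^ 2) = 4 * Real.pi ^ 2 * (4 / δ ^ 2) := by
      field_simp; norm_num
    rw [this, hδ2]
    nlinarith
  have hb4 : Real.pi ^ 2 / (4 * (δ / 8) ^ 2) * s ≤ 40 * C₁ + L / 4 := by
    have h1 := mul_le_mul_of_nonneg_right hb3 hs0.le
    have h2 : C₁ * s ≤ C₁ * 1 := mul_le_mul_of_nonneg_left hs1 (by linarith)
    have h3 : 40 * P * s = 40 * (C₁ * s) + 40 * (s * (Vm * L ^ a)) := by rw [hP]; ring
    rw [h3, hsL] at h1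
    linarith
  have hexp : 3 / 4 * L - (40 * C₁ + 1) - 320 * Vm * L ^ (a - 1) - L ≤
      -(|q| * (δ / 8) / 2) +
        -(Real.pi ^ 2 / (4 * (δ / 8) ^ 2) + q ^ 2 / 4 + 1) * s := by
    rw [← hsinv]
    have h2 : 2 / s = 1 / s + 1 / s := by ring
    have h6 : -(Real.pi ^ 2 / (4 * (δ / 8) ^ 2) + q ^ 2 / 4 + 1) * s =
      -(Real.pi ^ 2 / (4 * (δ / 8) ^ 2) * s) - q ^ 2 / 4 * s - s := by ring
    rw [h2, h6]
    linarith
  have h3 := hasym L hLL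
  refine h3.trans ?_
  have h4 : 1 / 4 * Real.exp L ≤ M / 2 := by
    rw [hexpL]
    have := Real.add_one_le_exp L₀
    linarith
  have h5 : Real.exp (3 / 4 * L - (40 * C₁ + 1) - 320 * Vm * L ^ (a - 1)) =
      Real.exp L * Real.exp (3 / 4 * L - (40 * C₁ + 1) - 320 * Vm * L ^ (a - 1) - L) := by
    rw [← Real.exp_add]; congr 1; ring
  rw [h5, ← mul_assoc]
  exact mul_le_mul h4 (Real.exp_le_exp.2 hexp) (Real.exp_pos _).le (by linarith)

lemma anti {g : ℝ → ℝ} (hg : ContDiffOn ℝ 1 g (Icc (-1) 1))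
    (he : ∀ x ∈ Icc (-1:ℝ) 1, g (-x) = g x)
    (hg' : ∀ x ∈ Icc (0:ℝ) (1/3), derivWithin g (Icc (-1) 1) x ≤ 0)
    (hb : ∀ x ∈ Icc (1/3:ℝ) 1, g x ≤ g (1/3)) :
    ∀ x ∈ Icc (1/3:ℝ) 1, g x ≤ g (2/3 - x) := by
  have hsub : Icc (0:ℝ) (1/3) ⊆ Icc (-1) 1 := Icc_subset_Icc (by norm_num) (by norm_num)
  have hA : AntitoneOn g (Icc (0:ℝ) (1/3)) := by
    refine antitoneOn_of_deriv_nonpos (convex_Icc _ _) (hg.continuousOn.mono hsub) ?_ ?_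
    · refine (hg.differentiableOn (by norm_num)).mono (interior_subset.trans hsub)
    · intro x hx
      have hx' := interior_subset hx
      have hn : Icc (-1:ℝ) 1 ∈ 𝓝 x := Icc_mem_nhds (by linarith [hx'.1]) (by linarith [hx'.2])
      rw [← derivWithin_of_mem_nhds hn]
      exact hg' x hx'
  intro x hx
  refine (hb x hx).trans ?_
  rcases le_total x (2/3) with h | h
  · exact hA ⟨by linarith, by linarith [hx.1]⟩ ⟨by norm_num, le_rfl⟩ (by linarith [hx.1])
  · have e := he (2/3 - x) ⟨by linarith [hx.2], by linarith⟩
    rw [← e]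
    exact hA ⟨by linarith, by linarith [hx.2]⟩ ⟨by norm_num, le_rfl⟩ (by linarith [hx.2])

end GB


theorem stmt16
    (a : ℝ) (ha1 : 1 < a) (ha2 : a < 2)
    (V φ : ℝ → ℝ)
    (hV_C1 : ContDiffOn ℝ 1 V (Icc (-1) 1)) (hφ_C1 : ContDiffOn ℝ 1 φ (Icc (-1) 1))
    (hV_nonneg : ∀ x ∈ Icc (-1:ℝ) 1, 0 ≤ V x) (hφ_nonneg : ∀ x ∈ Icc (-1:ℝ) 1, 0 ≤ φ x)
    (hV_even : ∀ x ∈ Icc (-1:ℝ) 1, V (-x) = V x) (hφ_even : ∀ x ∈ Icc (-1:ℝ) 1, φ (-x) = φ x)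
    (hV0 : 0 < V 0) (hφ0 : 0 < φ 0) (hφ1 : φ 1 = 0)
    (hV' : ∀ x ∈ Icc (0:ℝ) (1/3), derivWithin V (Icc (-1) 1) x ≤ 0)
    (hφ' : ∀ x ∈ Icc (0:ℝ) (1/3), derivWithin φ (Icc (-1) 1) x ≤ 0)
    (hVbd : ∀ x ∈ Icc (1/3:ℝ) 1, V x ≤ V (1/3))
    (hφbd : ∀ x ∈ Icc (1/3:ℝ) 1, φ x ≤ φ (1/3))
    (lam : ℝ) (hlam : 0 < lam)
    (T : ℝ) (hT : 0 < T)
    (u : ℝ → ℝ → ℝ)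
    (hu_cont : ContinuousOn (fun q : ℝ × ℝ => u q.1 q.2) (Ico 0 T ×ˢ Icc (-1) 1))
    (hu_nonneg : ∀ t ∈ Ico 0 T, ∀ x ∈ Icc (-1:ℝ) 1, 0 ≤ u t x)
    (hu_reg : ∀ t ∈ Ioo 0 T, ∀ x ∈ Ioo (-1:ℝ) 1,
      DifferentiableAt ℝ (fun s => u s x) t ∧ ContDiffAt ℝ 2 (u t) x)
    (heq : ∀ t ∈ Ioo 0 T, ∀ x ∈ Ioo (-1:ℝ) 1,
      deriv (fun s => u s x) t = deriv (deriv (u t)) x + V x * (u t x * Real.log (1 + u t x) ^ a))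
    (hbc : ∀ t ∈ Ioo 0 T, u t (-1) = 0 ∧ u t 1 = 0)
    (hic : ∀ x ∈ Icc (-1:ℝ) 1, u 0 x = lam * φ x)
    (hblow : ∀ M : ℝ, ∀ δ > 0, ∃ t, T - δ < t ∧ t < T ∧ ∃ x ∈ Icc (-1:ℝ) 1, M < u t x)
    :
    ∀ x ∈ Ioo (-1:ℝ) 1, Tendsto (fun t => u t x) (nhdsWithin T (Iio T)) atTop := by
  have S : GB.Sol a T V u := by
    refine ⟨hu_cont, hu_nonneg, ?_, ?_⟩
    · intro t ht x hx
      obtain ⟨h1, h2⟩ := hu_reg t ht x hx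
      refine ⟨_, _, h1.hasDerivAt, ⟨deriv (u t), ?_, ?_⟩, heq t ht x hx⟩
      · filter_upwards [h2.eventually (by simp)] with y hy
        exact (hy.differentiableAt (by norm_num)).hasDerivAt
      · have h3 : ContDiffAt ℝ 1 (deriv (u t)) x := by
          exact ContDiffAt.derivWithin h2 (by norm_num)
        exact (h3.differentiableAt (by norm_num)).hasDerivAt
    · intro t ht
      rcases ht.1.eq_or_lt with h | h
      · subst h
        have e := hφ_even 1 (by norm_num)
        rw [hic _ (by norm_num), hic _ (by norm_num), e, hφ1]
        simp
      · exact hbc t ⟨h, ht.2⟩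
  obtain ⟨Vm, hVm1, hVm⟩ : ∃ Vm : ℝ, 1 ≤ Vm ∧ ∀ x ∈ Icc (-1:ℝ) 1, V x ≤ Vm := by
    obtain ⟨B, hB⟩ := isCompact_Icc.bddAbove_image hV_C1.continuousOn
    exact ⟨max 1 B, le_max_left _ _, fun x hx => (hB ⟨x, hx, rfl⟩).trans (le_max_right _ _)⟩
  have hVr := GB.anti hV_C1 hV_even hV' hVbd
  have hφr := GB.anti hφ_C1 hφ_even hφ' hφbd
  have hmem : ∀ x ∈ Icc (1/3:ℝ) 1, x ∈ Icc (-1:ℝ) 1 ∧ 2/3 - x ∈ Icc (-1:ℝ) 1 := fun x hx =>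
    ⟨⟨by linarith [hx.1], hx.2⟩, ⟨by linarith [hx.2], by linarith [hx.1]⟩⟩
  have hng : ∀ x ∈ Icc (-1:ℝ) 1, -x ∈ Icc (-1:ℝ) 1 := fun x hx =>
    ⟨by linarith [hx.2], by linarith [hx.1]⟩
  have hi : ∀ x ∈ Icc (1/3:ℝ) 1, u 0 x ≤ u 0 (2/3 - x) := by
    intro x hx
    rw [hic _ (hmem x hx).1, hic _ (hmem x hx).2]
    exact mul_le_mul_of_nonneg_left (hφr x hx) hlam.le
  have hR := GB.reflect ha1 S hV_nonneg hVm hVr hi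
  have hL : ∀ t ∈ Ico 0 T, ∀ x ∈ Icc (-1:ℝ) (-1/3), u t x ≤ u t (-2/3 - x) := by
    have h := GB.reflect ha1 S.neg (Vm := Vm)
      (fun x hx => hV_nonneg _ (hng x hx)) (fun x hx => hVm _ (hng x hx))
      (fun x hx => by
        rw [hV_even _ (hmem x hx).1, hV_even _ (hmem x hx).2]
        exact hVr x hx)
      (fun x hx => by
        rw [hic _ (hng _ (hmem x hx).1), hic _ (hng _ (hmem x hx).2),
          hφ_even _ (hmem x hx).1, hφ_even _ (hmem x hx).2]
        exact mul_le_mul_of_nonneg_left (hφr x hx) hlam.le)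
    intro t ht x hx
    have := h t ht (-x) ⟨by linarith [hx.2], by linarith [hx.1]⟩
    simp only [neg_neg] at this
    have e : -(2/3 - -x) = -2/3 - x := by ring
    rwa [e] at this
  intro x hx
  have hxa : |x| < 1 := abs_lt.2 hx
  set ρ := (1 - |x|) / 2 with hρ
  have hρ0 : 0 < ρ := by linarith
  set κ := Real.pi ^ 2 / (4 * ρ ^ 2) + 0 ^ 2 / 4 + 1 with hκ
  have hκ0 : 0 < κ := by positivity
  rw [Filter.tendsto_atTop]
  intro N
  obtain ⟨t₁, ht₁, hb⟩ := GB.big ha1 ha2 hT S hVm1 hV_nonneg hVm hR hL hblow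
    (R := |x| + ρ) (by linarith) ((|N| + 1) * Real.exp (κ * T))
  filter_upwards [Ioo_mem_nhdsLT ht₁.2] with t ht
  have hmv := GB.move S hV_nonneg (t₀ := t₁) (t₁ := t) (c := x) (q := 0) (ρ := ρ)
    (A := (|N| + 1) * Real.exp (κ * T)) ht₁.1.le ⟨ht.1.le, ht.2⟩ hρ0 (by positivity)
    (by linarith) (by rw [zero_mul, add_zero]; linarith)
    (fun y hy => hb y (by
      have h1 : |y| ≤ |x| + |y - x| := by
        have := abs_add_le x (y - x)
        rwa [add_sub_cancel] at this
      linarith))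
  rw [zero_mul, add_zero, abs_zero, zero_mul, zero_div, neg_zero, Real.exp_zero, mul_one,
    mul_assoc, ← Real.exp_add] at hmv
  refine le_trans ?_ hmv
  have h1 : 1 ≤ Real.exp (κ * T + -κ * (t - t₁)) := by
    rw [Real.one_le_exp_iff]
    have : κ * T + -κ * (t - t₁) = κ * (T - t + t₁) := by ring
    rw [this]
    exact mul_nonneg hκ0.le (by linarith [ht.2, ht₁.1])
  calc N ≤ |N| + 1 := by linarith [le_abs_self N]
    _ ≤ (|N| + 1) * Real.exp (κ * T + -κ * (t - t₁)) :=
      le_mul_of_one_le_right (by positivity) h1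
end

section
/- Let f(u) = u·(log(1+u))^a with 1 < a < 2. Let V, φ ∈ C¹([−1,1]) be nonnegative even functions with V(0) > 0, φ(0) > 0, φ(1) = 0, with V′ ≤ 0 and φ′ ≤ 0 on [0,1/3], and with 0 ≤ V(x) ≤ V(1/3) and 0 ≤ φ(x) ≤ φ(1/3) for all x ∈ [1/3,1]; assume moreover φ ∈ C²([−1,1]) and for some r ∈ (0,1): φ > 0 and V > 0 on [0,r] and φ″ ≥ 0 on [r,1]. Let λ > 0, let 0 < T < ∞, and let u be a nonnegative classical solution on [0,T)×[−1,1] of u_t = u_xx + V(x)f(u) with u(t,±1) = 0 and u(0,·) = λφ, satisfying ∂_t u ≥ 0 and blowing up at time T (limsup_{t→T⁻} max_{x∈[−1,1]} u(t,x) = +∞). Then there exist constants C₂ ≥ C₁ > 0 such that for all t ∈ (T/2,T) and all x ∈ (−1,1): C₁(1−|x|)·exp[C₁(T−t)^{−1/(a−1)}] ≤ u(t,x) ≤ u(t,0) ≤ exp[C₂(T−t)^{−1/(a−1)}]. -/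
open Set Metric Filter

/-- `g` has second derivative `g2` at `x`. -/
def HasD2 (g : ℝ → ℝ) (g2 x : ℝ) : Prop :=
  ∃ g1 : ℝ → ℝ, (∀ᶠ y in nhds x, HasDerivAt g (g1 y) y) ∧ HasDerivAt g1 g2 x

lemma HasD2.sub {f g : ℝ → ℝ} {f2 g2 x : ℝ} (hf : HasD2 f f2 x) (hg : HasD2 g g2 x) :
    HasD2 (fun y => f y - g y) (f2 - g2) x := by
  obtain ⟨f1, a, b⟩ := hf
  obtain ⟨g1, c, d⟩ := hg
  refine ⟨fun y => f1 y - g1 y, ?_, b.sub d⟩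
  filter_upwards [a, c] with y h1 h2 using h1.sub h2

lemma HasD2.const_mul {f : ℝ → ℝ} {f2 x : ℝ} (c : ℝ) (hf : HasD2 f f2 x) :
    HasD2 (fun y => c * f y) (c * f2) x := by
  obtain ⟨f1, a, b⟩ := hf
  refine ⟨fun y => c * f1 y, ?_, b.const_mul c⟩
  filter_upwards [a] with y h1 using h1.const_mul c

lemma HasD2.sub_const {f : ℝ → ℝ} {f2 x : ℝ} (c : ℝ) (hf : HasD2 f f2 x) :
    HasD2 (fun y => f y - c) f2 x := by
  obtain ⟨f1, a, b⟩ := hf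
  refine ⟨f1, ?_, b⟩
  filter_upwards [a] with y h1 using h1.sub_const c

lemma HasD2.reflect {f : ℝ → ℝ} {f2 x : ℝ} (c : ℝ) (hf : HasD2 f f2 (c - x)) :
    HasD2 (fun y => f (c - y)) f2 x := by
  obtain ⟨f1, a, b⟩ := hf
  have hlin : ∀ y : ℝ, HasDerivAt (fun y => c - y) (-1) y := fun y => by
    simpa using (hasDerivAt_id y).const_sub c
  refine ⟨fun y => - f1 (c - y), ?_, ?_⟩
  · have ht : Tendsto (fun y : ℝ => c - y) (nhds x) (nhds (c - x)) := (hlin x).continuousAt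
    filter_upwards [ht.eventually a] with y h1
    have := h1.comp y (hlin y)
    simpa [Function.comp_def] using this
  · have h := (b.comp x (hlin x)).neg
    have h' : HasDerivAt (fun y => - f1 (c - y)) (-(f2 * -1)) x := h
    exact h'.congr_deriv (by ring)

lemma HasD2.of_contDiffAt {f : ℝ → ℝ} {x : ℝ} (hf : ContDiffAt ℝ 2 f x) :
    HasD2 f (deriv (deriv f) x) x := by
  refine ⟨deriv f, ?_, ?_⟩
  · filter_upwards [hf.eventually (by simp)] with y hy
    exact (hy.differentiableAt (by simp)).hasDerivAt
  · have : ContDiffAt ℝ 1 (deriv f) x := hf.derivWithin (by norm_num)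
    exact (this.differentiableAt (by simp)).hasDerivAt

lemma HasD2.nonneg {f : ℝ → ℝ} {f2 x : ℝ} (hf : HasD2 f f2 x) (hm : IsLocalMin f x) : 0 ≤ f2 := by
  obtain ⟨f1, a, b⟩ := hf
  by_contra hneg
  push Not at hneg
  have hd : deriv f =ᶠ[nhds x] f1 := by
    filter_upwards [a] with y hy using hy.deriv
  have hdd : deriv (deriv f) x = f2 := by
    rw [hd.deriv_eq]; exact b.deriv
  have h0 : deriv f x = 0 := hm.deriv_eq_zero
  have hmax : IsLocalMax f x := isLocalMax_of_deriv_deriv_neg (by rw [hdd]; exact hneg) h0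
    a.self_of_nhds.continuousAt
  have hc : f =ᶠ[nhds x] fun _ => f x := by
    filter_upwards [hm, hmax] with y h1 h2 using le_antisymm h2 h1
  have h1 : deriv f =ᶠ[nhds x] fun _ => 0 := by
    have := hc.deriv
    simpa using this
  have : deriv (deriv f) x = 0 := by rw [h1.deriv_eq]; simp
  linarith

/-- Minimum principle by touching. -/
lemma minPrinciple (D : ℝ → ℝ → ℝ) (t0 t1 α β K : ℝ)
    (hc : ContinuousOn (fun q : ℝ × ℝ => D q.1 q.2) (Icc t0 t1 ×ˢ Icc α β))
    (hi : ∀ x ∈ Icc α β, 0 ≤ D t0 x)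
    (hα : ∀ t ∈ Icc t0 t1, 0 ≤ D t α) (hβ : ∀ t ∈ Icc t0 t1, 0 ≤ D t β)
    (htouch : ∀ t ∈ Ioc t0 t1, ∀ x ∈ Ioo α β, D t x < 0 → IsLocalMin (D t) x →
      ∃ D', HasDerivAt (fun s => D s x) D' t ∧ K * D t x < D') :
    ∀ t ∈ Icc t0 t1, ∀ x ∈ Icc α β, 0 ≤ D t x := by
  by_contra hcon
  push Not at hcon
  obtain ⟨t, ht, x, hx, hneg⟩ := hcon
  have hE : ContinuousOn (fun q : ℝ × ℝ => Real.exp (-K * q.1) * D q.1 q.2)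
      (Icc t0 t1 ×ˢ Icc α β) := by
    apply ContinuousOn.mul _ hc
    fun_prop
  obtain ⟨⟨s, y⟩, hsy, hmin⟩ := (isCompact_Icc.prod isCompact_Icc).exists_isMinOn
    ⟨(t, x), ht, hx⟩ hE
  have hs : s ∈ Icc t0 t1 := hsy.1
  have hy : y ∈ Icc α β := hsy.2
  have hmin' : ∀ s' ∈ Icc t0 t1, ∀ y' ∈ Icc α β,
      Real.exp (-K * s) * D s y ≤ Real.exp (-K * s') * D s' y' :=
    fun s' hs' y' hy' => hmin (a := (s', y')) ⟨hs', hy'⟩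
  have hDneg : D s y < 0 := by
    have h1 := hmin' t ht x hx
    have h2 : Real.exp (-K * t) * D t x < 0 := mul_neg_of_pos_of_neg (Real.exp_pos _) hneg
    by_contra h3
    push Not at h3
    have : 0 ≤ Real.exp (-K * s) * D s y := by positivity
    linarith
  have hst : t0 < s := by
    rcases hs.1.eq_or_lt with h | h
    · subst h; exact absurd (hi y hy) (not_le.2 hDneg)
    · exact h
  have hy1 : α < y := by
    rcases hy.1.eq_or_lt with h | h
    · subst h; exact absurd (hα s hs) (not_le.2 hDneg)
    · exact h
  have hy2 : y < β := by
    rcases hy.2.eq_or_lt with h | h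
    · subst h; exact absurd (hβ s hs) (not_le.2 hDneg)
    · exact h
  have hloc : IsLocalMin (D s) y := by
    filter_upwards [Icc_mem_nhds hy1 hy2] with z hz
    exact le_of_mul_le_mul_left (hmin' s hs z hz) (Real.exp_pos _)
  obtain ⟨D', hD', hlt⟩ := htouch s ⟨hst, hs.2⟩ y ⟨hy1, hy2⟩ hDneg hloc
  have hder : HasDerivAt (fun s' => Real.exp (-K * s') * D s' y)
      (Real.exp (-K * s) * (D' - K * D s y)) s := by
    have h1 : HasDerivAt (fun s' => Real.exp (-K * s')) (Real.exp (-K * s) * (-K)) s := by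
      have := ((hasDerivAt_id s).const_mul (-K)).exp
      simpa using this
    have := h1.mul hD'
    exact this.congr_deriv (by ring)
  have hpos : 0 < Real.exp (-K * s) * (D' - K * D s y) :=
    mul_pos (Real.exp_pos _) (by linarith)
  rw [hasDerivAt_iff_tendsto_slope] at hder
  have hev := (hder.mono_left (nhdsWithin_mono s (fun z (hz : z ∈ Iio s) => ne_of_lt hz))).eventually
    (lt_mem_nhds hpos)
  have hev2 : ∀ᶠ z in nhdsWithin s (Iio s), z ∈ Ioo t0 s := Ioo_mem_nhdsLT hst
  obtain ⟨z, hz1, hz2⟩ := (hev.and hev2).exists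
  have h3 := hmin' z ⟨hz2.1.le, hz2.2.le.trans hs.2⟩ y hy
  rw [slope_def_field] at hz1
  have h4 : z - s < 0 := by linarith [hz2.2]
  have := div_nonpos_of_nonneg_of_nonpos (a := Real.exp (-K * z) * D z y - Real.exp (-K * s) * D s y)
    (b := z - s) (by linarith) h4.le
  linarith

/-- The nonlinearity. -/
noncomputable def FF (a u : ℝ) : ℝ := u * Real.log (1 + u) ^ a

/-- Its derivative. -/
noncomputable def FD (a u : ℝ) : ℝ :=
  Real.log (1 + u) ^ a + a * (u / (1 + u)) * Real.log (1 + u) ^ (a - 1)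

lemma log1_nonneg {u : ℝ} (hu : 0 ≤ u) : 0 ≤ Real.log (1 + u) := Real.log_nonneg (by linarith)

lemma FF_nonneg {a u : ℝ} (hu : 0 ≤ u) : 0 ≤ FF a u :=
  mul_nonneg hu (Real.rpow_nonneg (log1_nonneg hu) _)

lemma FF_zero (a : ℝ) : FF a 0 = 0 := by simp [FF]

lemma FD_nonneg {a u : ℝ} (ha : 1 < a) (hu : 0 ≤ u) : 0 ≤ FD a u := by
  have h1 := Real.rpow_nonneg (log1_nonneg hu) a
  have h2 := Real.rpow_nonneg (log1_nonneg hu) (a - 1)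
  unfold FD
  positivity

lemma FF_hasDerivAt {a u : ℝ} (ha : 1 < a) (hu : 0 ≤ u) : HasDerivAt (FF a) (FD a u) u := by
  have h1 : HasDerivAt (fun v : ℝ => 1 + v) 1 u := by simpa using (hasDerivAt_id u).const_add 1
  have h2 := h1.log (by linarith : (1:ℝ) + u ≠ 0)
  have h3 := h2.rpow_const (p := a) (Or.inr ha.le)
  have h4 := (hasDerivAt_id u).mul h3
  have h5 : HasDerivAt (FF a) _ u := h4
  refine h5.congr_deriv ?_
  unfold FD
  simp only [id]
  ring

lemma FD_mono {a u v : ℝ} (ha : 1 < a) (hu : 0 ≤ u) (huv : u ≤ v) : FD a u ≤ FD a v := by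
  have hl : Real.log (1 + u) ≤ Real.log (1 + v) := Real.log_le_log (by linarith) (by linarith)
  have h0 := log1_nonneg hu
  have h1 : Real.log (1 + u) ^ a ≤ Real.log (1 + v) ^ a :=
    Real.rpow_le_rpow h0 hl (by linarith)
  have h2 : Real.log (1 + u) ^ (a - 1) ≤ Real.log (1 + v) ^ (a - 1) :=
    Real.rpow_le_rpow h0 hl (by linarith)
  have h3 : u / (1 + u) ≤ v / (1 + v) := by
    rw [div_le_div_iff₀ (by linarith) (by linarith)]; nlinarith
  have h4 : 0 ≤ v / (1 + v) := div_nonneg (by linarith) (by linarith)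
  unfold FD
  have := Real.rpow_nonneg h0 (a - 1)
  gcongr

lemma FF_tangent {a x y : ℝ} (ha : 1 < a) (hx : 0 ≤ x) (hy : 0 ≤ y) :
    FF a x + FD a x * (y - x) ≤ FF a y := by
  have hcont : ContinuousOn (FF a) (Ici 0) := fun z hz =>
    (FF_hasDerivAt ha hz).continuousAt.continuousWithinAt
  rcases lt_trichotomy x y with h | h | h
  · obtain ⟨c, hc, hc2⟩ := exists_hasDerivAt_eq_slope (FF a) (FD a) h
      (hcont.mono fun z hz => hx.trans hz.1) (fun z hz => FF_hasDerivAt ha (hx.trans hz.1.le))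
    have h1 := FD_mono ha hx hc.1.le
    rw [hc2, le_div_iff₀ (by linarith)] at h1
    linarith
  · subst h; simp
  · obtain ⟨c, hc, hc2⟩ := exists_hasDerivAt_eq_slope (FF a) (FD a) h
      (hcont.mono fun z hz => hy.trans hz.1) (fun z hz => FF_hasDerivAt ha (hy.trans hz.1.le))
    have h1 := FD_mono ha (hy.trans hc.1.le) hc.2.le
    rw [hc2, div_le_iff₀ (by linarith)] at h1
    linarith

lemma FF_mono {a x y : ℝ} (ha : 1 < a) (hx : 0 ≤ x) (hxy : x ≤ y) : FF a x ≤ FF a y := by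
  have h := FF_tangent ha hx (hx.trans hxy)
  have := mul_nonneg (FD_nonneg ha hx) (sub_nonneg.2 hxy)
  linarith

/-- One sided Lipschitz bound. -/
lemma FF_lip {a x y B : ℝ} (ha : 1 < a) (hx : 0 ≤ x) (hxy : x ≤ y) (hy : y ≤ B) :
    FF a y - FF a x ≤ FD a B * (y - x) := by
  have h := FF_tangent ha (hx.trans hxy) hx
  have h2 := mul_le_mul_of_nonneg_right (FD_mono ha (hx.trans hxy) hy) (sub_nonneg.2 hxy)
  linarith

/-- Bundled data of the solution. -/
structure Sol (a : ℝ) (V : ℝ → ℝ) (T : ℝ) (u : ℝ → ℝ → ℝ) : Prop where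
  ha : 1 < a
  hT : 0 < T
  V_nonneg : ∀ x ∈ Icc (-1:ℝ) 1, 0 ≤ V x
  V_le : ∀ x ∈ Icc (-1:ℝ) 1, V x ≤ V 0
  cont : ContinuousOn (fun q : ℝ × ℝ => u q.1 q.2) (Ico 0 T ×ˢ Icc (-1) 1)
  nonneg : ∀ t ∈ Ico 0 T, ∀ x ∈ Icc (-1:ℝ) 1, 0 ≤ u t x
  reg : ∀ t ∈ Ioo 0 T, ∀ x ∈ Ioo (-1:ℝ) 1,
      DifferentiableAt ℝ (fun s => u s x) t ∧ ContDiffAt ℝ 2 (u t) x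
  eq : ∀ t ∈ Ioo 0 T, ∀ x ∈ Ioo (-1:ℝ) 1,
      deriv (fun s => u s x) t = deriv (deriv (u t)) x + V x * FF a (u t x)
  bc : ∀ t ∈ Ico 0 T, u t (-1) = 0 ∧ u t 1 = 0
  dmono : ∀ t ∈ Ioo 0 T, ∀ x ∈ Ioo (-1:ℝ) 1, 0 ≤ deriv (fun s => u s x) t

namespace Sol
variable {a : ℝ} {V : ℝ → ℝ} {T : ℝ} {u : ℝ → ℝ → ℝ}

lemma ev (S : Sol a V T u) {t x : ℝ} (ht : t ∈ Ioo 0 T) (hx : x ∈ Ioo (-1:ℝ) 1) :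
    ∃ d, HasD2 (u t) d x ∧ HasDerivAt (fun s => u s x) (d + V x * FF a (u t x)) t ∧
      0 ≤ d + V x * FF a (u t x) := by
  refine ⟨deriv (deriv (u t)) x, HasD2.of_contDiffAt (S.reg t ht x hx).2, ?_, ?_⟩
  · rw [← S.eq t ht x hx]; exact (S.reg t ht x hx).1.hasDerivAt
  · rw [← S.eq t ht x hx]; exact S.dmono t ht x hx

lemma contT (S : Sol a V T u) {x : ℝ} (hx : x ∈ Icc (-1:ℝ) 1) :
    ContinuousOn (fun s => u s x) (Ico 0 T) := by
  have := S.cont.comp (f := fun s : ℝ => (s, x)) (s := Ico 0 T) (by fun_prop)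
    (fun s hs => ⟨hs, hx⟩)
  exact this

lemma contX (S : Sol a V T u) {t : ℝ} (ht : t ∈ Ico 0 T) :
    ContinuousOn (u t) (Icc (-1) 1) := by
  have := S.cont.comp (f := fun y : ℝ => (t, y)) (s := Icc (-1:ℝ) 1) (by fun_prop)
    (fun s hs => ⟨ht, hs⟩)
  exact this

lemma mono (S : Sol a V T u) {x : ℝ} (hx : x ∈ Icc (-1:ℝ) 1) {s t : ℝ} (hs : 0 ≤ s) (hst : s ≤ t)
    (ht : t < T) : u s x ≤ u t x := by
  rcases hx.1.eq_or_lt with h | h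
  · subst h
    rw [(S.bc s ⟨hs, hst.trans_lt ht⟩).1, (S.bc t ⟨hs.trans hst, ht⟩).1]
  rcases hx.2.eq_or_lt with h' | h'
  · subst h'
    rw [(S.bc s ⟨hs, hst.trans_lt ht⟩).2, (S.bc t ⟨hs.trans hst, ht⟩).2]
  have : MonotoneOn (fun s => u s x) (Ico 0 T) := by
    apply monotoneOn_of_deriv_nonneg (convex_Ico 0 T) (S.contT hx)
    · rw [interior_Ico]
      exact fun s hs => (S.reg s hs x ⟨h, h'⟩).1.differentiableWithinAt
    · rw [interior_Ico]
      exact fun s hs => S.dmono s hs x ⟨h, h'⟩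
  exact this ⟨hs, hst.trans_lt ht⟩ ⟨hs.trans hst, ht⟩ hst

lemma bdd (S : Sol a V T u) {t1 : ℝ} (ht1 : t1 ∈ Ico 0 T) :
    ∃ B, 0 ≤ B ∧ ∀ t ∈ Icc 0 t1, ∀ x ∈ Icc (-1:ℝ) 1, u t x ≤ B := by
  obtain ⟨z, hz, hm⟩ := isCompact_Icc.exists_isMaxOn (nonempty_Icc.2 (by norm_num : (-1:ℝ) ≤ 1))
    (S.contX ht1)
  refine ⟨u t1 z, S.nonneg t1 ht1 z hz, fun t ht x hx => ?_⟩
  exact (S.mono hx ht.1 ht.2 ht1.2).trans (hm hx)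

/-- Reflection comparison. -/
lemma reflect (S : Sol a V T u) (c α β : ℝ) (hα : -1 ≤ α) (hβ : β ≤ 1)
    (hα' : c - α ≤ 1) (hβ' : -1 ≤ c - β)
    (hV : ∀ x ∈ Icc α β, V x ≤ V (c - x))
    (hi : ∀ x ∈ Icc α β, u 0 x ≤ u 0 (c - x))
    (h1 : ∀ t ∈ Ico 0 T, u t α ≤ u t (c - α))
    (h2 : ∀ t ∈ Ico 0 T, u t β ≤ u t (c - β)) :
    ∀ t ∈ Ico 0 T, ∀ x ∈ Icc α β, u t x ≤ u t (c - x) := by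
  intro t1 ht1 x hx
  obtain ⟨B, hB0, hB⟩ := S.bdd ht1
  have key := minPrinciple (fun t x => u t (c - x) - u t x) 0 t1 α β (V 0 * FD a B + 1) ?_ ?_ ?_ ?_ ?_
    t1 ⟨ht1.1, le_rfl⟩ x hx
  · linarith
  · apply ContinuousOn.sub
    · exact S.cont.comp (f := fun q : ℝ × ℝ => (q.1, c - q.2)) (by fun_prop)
        (fun q hq => ⟨⟨hq.1.1, hq.1.2.trans_lt ht1.2⟩, by
          have := hq.2.1; have := hq.2.2; constructor <;> simp only <;> linarith⟩)
    · exact S.cont.mono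
        (fun q hq => ⟨⟨hq.1.1, hq.1.2.trans_lt ht1.2⟩, by
          have := hq.2.1; have := hq.2.2; constructor <;> linarith⟩)
  · intro x hx; linarith [hi x hx]
  · intro t ht; linarith [h1 t ⟨ht.1, ht.2.trans_lt ht1.2⟩]
  · intro t ht; linarith [h2 t ⟨ht.1, ht.2.trans_lt ht1.2⟩]
  · intro t ht x hx hneg hmin
    have htT : t ∈ Ioo 0 T := ⟨ht.1, ht.2.trans_lt ht1.2⟩
    have hx1 : x ∈ Ioo (-1:ℝ) 1 := ⟨by linarith [hx.1], by linarith [hx.2]⟩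
    have hx2 : c - x ∈ Ioo (-1:ℝ) 1 := ⟨by linarith [hx.2], by linarith [hx.1]⟩
    obtain ⟨d1, e1, f1, -⟩ := S.ev htT hx1
    obtain ⟨d2, e2, f2, -⟩ := S.ev htT hx2
    refine ⟨_, f2.sub f1, ?_⟩
    have h3 := ((HasD2.reflect c e2).sub e1).nonneg hmin
    have hu1 := S.nonneg t ⟨ht.1.le, htT.2⟩ x (Ioo_subset_Icc_self hx1)
    have hu2 := S.nonneg t ⟨ht.1.le, htT.2⟩ _ (Ioo_subset_Icc_self hx2)
    have h4 := FF_lip S.ha hu2 (by linarith : u t (c - x) ≤ u t x)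
      (hB t ⟨ht.1.le, ht.2⟩ x (Ioo_subset_Icc_self hx1))
    have h5 := hV x (Ioo_subset_Icc_self hx)
    have h6 := FF_nonneg (a := a) hu2
    have h7 := S.V_nonneg x (Ioo_subset_Icc_self hx1)
    have h8 := S.V_le x (Ioo_subset_Icc_self hx1)
    have h9 := FD_nonneg S.ha hB0
    have h10 : V x * (FF a (u t x) - FF a (u t (c - x))) ≤
        V 0 * (FD a B * (u t x - u t (c - x))) :=
      (mul_le_mul_of_nonneg_left h4 h7).trans
        (mul_le_mul_of_nonneg_right h8 (mul_nonneg h9 (by linarith)))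
    have h11 := mul_le_mul_of_nonneg_right h5 h6
    nlinarith

/-- Travelling wave lower bound for supersolutions of the heat equation. -/
lemma _root_.wave (W : ℝ → ℝ → ℝ) (s0 s1 p q m : ℝ) (hs : s0 < s1) (hpq : p < q) (hm : 0 ≤ m)
    (hc : ContinuousOn (fun q : ℝ × ℝ => W q.1 q.2) (Icc s0 s1 ×ˢ Icc p q))
    (hnn : ∀ t ∈ Icc s0 s1, ∀ x ∈ Icc p q, 0 ≤ W t x)
    (hp : ∀ t ∈ Icc s0 s1, m ≤ W t p)
    (hsup : ∀ t ∈ Ioc s0 s1, ∀ x ∈ Ioo p q, ∃ d d', HasD2 (W t) d x ∧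
      HasDerivAt (fun s => W s x) d' t ∧ d ≤ d') :
    ∀ x ∈ Icc p q, m * Real.exp (-((q - p) ^ 2 / (s1 - s0))) * ((q - p) / (s1 - s0)) * (q - x)
      ≤ W s1 x := by
  intro x hx
  have hτ : 0 < s1 - s0 := by linarith
  have hℓ : 0 < q - p := by linarith
  set μ := (q - p) / (s1 - s0) with hμ
  have hμ0 : 0 < μ := by positivity
  have hμτ : μ * (s1 - s0) = q - p := by rw [hμ]; field_simp
  set η := m * Real.exp (-((q - p) ^ 2 / (s1 - s0))) with hη
  have hη0 : 0 ≤ η := by positivity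
  have hsq : (q - p) ^ 2 / (s1 - s0) = μ * (q - p) := by rw [hμ]; ring
  have key := minPrinciple
    (fun t x => W t x - η * (Real.exp (μ * (μ * (t - s0) - (x - p))) - 1)) s0 s1 p q 1
    ?_ ?_ ?_ ?_ ?_ s1 ⟨hs.le, le_rfl⟩ x hx
  · rw [hμτ] at key
    have h1 := Real.add_one_le_exp (μ * (q - p - (x - p)))
    have h2 := mul_le_mul_of_nonneg_left h1 hη0
    nlinarith
  · apply hc.sub
    fun_prop
  · intro x hx
    have h1 := hnn s0 ⟨le_rfl, hs.le⟩ x hx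
    have h2 : Real.exp (μ * (μ * (s0 - s0) - (x - p))) ≤ 1 := by
      rw [Real.exp_le_one_iff]
      have := mul_nonneg hμ0.le (sub_nonneg.2 hx.1)
      linarith
    nlinarith
  · intro t ht
    have h1 := hp t ht
    have h2 : Real.exp (μ * (μ * (t - s0) - (p - p))) ≤ Real.exp ((q - p) ^ 2 / (s1 - s0)) := by
      rw [Real.exp_le_exp, hsq]
      have := mul_le_mul_of_nonneg_left (sub_le_sub_right ht.2 s0) hμ0.le
      apply mul_le_mul_of_nonneg_left _ hμ0.le
      linarith
    have h3 := mul_le_mul_of_nonneg_left h2 hη0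
    have h4 : η * Real.exp ((q - p) ^ 2 / (s1 - s0)) = m := by
      rw [hη, mul_assoc, ← Real.exp_add]; simp
    nlinarith
  · intro t ht
    have h1 := hnn t ht q ⟨hpq.le, le_rfl⟩
    have h2 : Real.exp (μ * (μ * (t - s0) - (q - p))) ≤ 1 := by
      rw [Real.exp_le_one_iff]
      have := mul_le_mul_of_nonneg_left (sub_le_sub_right ht.2 s0) hμ0.le
      have := mul_nonneg hμ0.le (by linarith : 0 ≤ (q - p) - μ * (t - s0))
      linarith
    nlinarith
  · intro t ht x hx hneg hmin
    obtain ⟨d, d', e1, e2, e3⟩ := hsup t ht x hx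
    have g1 : ∀ y, HasDerivAt (fun y => Real.exp (μ * (μ * (t - s0) - (y - p))))
        (-μ * Real.exp (μ * (μ * (t - s0) - (y - p)))) y := fun y => by
      have h0 : HasDerivAt (fun y => μ * (μ * (t - s0) - (y - p))) (μ * (-1)) y :=
        (((hasDerivAt_id y).sub_const p).const_sub _).const_mul μ
      exact h0.exp.congr_deriv (by ring)
    have g2 : HasD2 (fun y => η * (Real.exp (μ * (μ * (t - s0) - (y - p))) - 1))
        (η * (-μ * (-μ * Real.exp (μ * (μ * (t - s0) - (x - p)))))) x :=
      HasD2.const_mul η (HasD2.sub_const 1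
        ⟨_, Eventually.of_forall g1, (g1 x).const_mul (-μ)⟩)
    have g3 : HasDerivAt (fun s => η * (Real.exp (μ * (μ * (s - s0) - (x - p))) - 1))
        (η * (μ * μ * Real.exp (μ * (μ * (t - s0) - (x - p))))) t := by
      have h0 : HasDerivAt (fun s => μ * (μ * (s - s0) - (x - p))) (μ * (μ * 1)) t :=
        ((((hasDerivAt_id t).sub_const s0).const_mul μ).sub_const (x - p)).const_mul μ
      exact ((h0.exp.sub_const 1).const_mul η).congr_deriv (by ring)
    refine ⟨_, e2.sub g3, ?_⟩
    have h3 := (e1.sub g2).nonneg hmin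
    linarith

end Sol

namespace Sol
variable {a : ℝ} {V : ℝ → ℝ} {T : ℝ} {u : ℝ → ℝ → ℝ}

lemma diffSup (S : Sol a V T u) {h t x : ℝ} (hh : 0 < h) (ht : 0 < t) (hth : t + h < T)
    (hx : x ∈ Ioo (-1:ℝ) 1) :
    ∃ d d', HasD2 (fun y => u (t + h) y - u t y) d x ∧
      HasDerivAt (fun s => u (s + h) x - u s x) d' t ∧ d ≤ d' := by
  obtain ⟨d1, e1, f1, -⟩ := S.ev (t := t + h) ⟨by linarith, hth⟩ hx
  obtain ⟨d2, e2, f2, -⟩ := S.ev (t := t) ⟨by linarith, by linarith⟩ hx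
  refine ⟨_, _, e1.sub e2, (f1.comp_add_const t h).sub f2, ?_⟩
  have hx' := Ioo_subset_Icc_self hx
  have h1 := S.mono hx' ht.le (by linarith : t ≤ t + h) hth
  have h2 := FF_mono S.ha (S.nonneg t ⟨ht.le, by linarith⟩ x hx') h1
  have h3 := mul_le_mul_of_nonneg_left h2 (S.V_nonneg x hx')
  linarith

lemma diffCont (S : Sol a V T u) {h t0 t1 α β : ℝ} (hh : 0 < h) (ht0 : 0 ≤ t0) (hth : t1 + h < T)
    (hα : -1 ≤ α) (hβ : β ≤ 1) :
    ContinuousOn (fun q : ℝ × ℝ => u (q.1 + h) q.2 - u q.1 q.2) (Icc t0 t1 ×ˢ Icc α β) := by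
  apply ContinuousOn.sub
  · exact S.cont.comp (f := fun q : ℝ × ℝ => (q.1 + h, q.2)) (by fun_prop)
      (fun q hq => ⟨⟨by have := hq.1.1; simp only; linarith, by
        have := hq.1.2; simp only; linarith⟩, ⟨hα.trans hq.2.1, hq.2.2.trans hβ⟩⟩)
  · exact S.cont.mono
      (fun q hq => ⟨⟨ht0.trans hq.1.1, by have := hq.1.2; linarith⟩,
        ⟨hα.trans hq.2.1, hq.2.2.trans hβ⟩⟩)

lemma _root_.chi_D2 (α β x : ℝ) : HasD2 (fun y => (y - α) * (β - y)) (-2) x := by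
  refine ⟨fun y => (β - y) - (y - α), Eventually.of_forall fun y => ?_, ?_⟩
  · have h1 := (hasDerivAt_id y).sub_const α
    have h2 := (hasDerivAt_id y).const_sub β
    exact (h1.mul h2).congr_deriv (by simp; ring)
  · have h1 := (hasDerivAt_id x).sub_const α
    have h2 := (hasDerivAt_id x).const_sub β
    exact (h2.sub h1).congr_deriv (by norm_num)

lemma startLow (S : Sol a V T u) {α β c : ℝ} (hα : -1 ≤ α) (hβ : β ≤ 1) (hc : 0 < c)
    (hg : ∀ x ∈ Ioo α β, ∃ d, HasD2 (u 0) d x ∧ c ≤ d + V x * FF a (u 0 x)) {h : ℝ} (hh : 0 < h)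
    (hh1 : h ≤ 1) (hhT : h < T) :
    ∀ x ∈ Icc α β, c / 8 * h * ((x - α) * (β - x)) ≤ u h x - u 0 x := by
  intro x hx
  have key := minPrinciple
    (fun t x => u t x - u 0 x - c / 8 * t * ((x - α) * (β - x))) 0 h α β 0
    ?_ ?_ ?_ ?_ ?_ h ⟨hh.le, le_rfl⟩ x hx
  · linarith
  · apply ContinuousOn.sub
    · apply ContinuousOn.sub
      · exact S.cont.mono
          (fun q hq => ⟨⟨hq.1.1, hq.1.2.trans_lt hhT⟩, ⟨hα.trans hq.2.1, hq.2.2.trans hβ⟩⟩)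
      · exact S.cont.comp (f := fun q : ℝ × ℝ => ((0:ℝ), q.2)) (by fun_prop)
          (fun q hq => ⟨⟨le_rfl, S.hT⟩, ⟨hα.trans hq.2.1, hq.2.2.trans hβ⟩⟩)
    · fun_prop
  · intro x hx; simp
  · intro t ht
    have hαI : α ∈ Icc (-1:ℝ) 1 := ⟨hα, by linarith [hx.1, hx.2]⟩
    have := S.mono hαI le_rfl ht.1 (ht.2.trans_lt hhT)
    simp only [sub_self, zero_mul, mul_zero]
    linarith
  · intro t ht
    have hαI : β ∈ Icc (-1:ℝ) 1 := ⟨by linarith [hx.1, hx.2], hβ⟩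
    have := S.mono hαI le_rfl ht.1 (ht.2.trans_lt hhT)
    simp only [sub_self, mul_zero]
    linarith
  · intro t ht x hx hneg hmin
    have hx1 : x ∈ Ioo (-1:ℝ) 1 := ⟨by linarith [hx.1], by linarith [hx.2]⟩
    have hx' := Ioo_subset_Icc_self hx1
    obtain ⟨d1, e1, f1, -⟩ := S.ev (t := t) ⟨ht.1, ht.2.trans_lt hhT⟩ hx1
    obtain ⟨d0, e0, hcd⟩ := hg x hx
    have h3 := ((e1.sub e0).sub ((chi_D2 α β x).const_mul (c / 8 * t))).nonneg hmin
    have hd : HasDerivAt (fun s => c / 8 * s * ((x - α) * (β - x)))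
        (c / 8 * ((x - α) * (β - x))) t := by
      have := ((hasDerivAt_id t).const_mul (c / 8)).mul_const ((x - α) * (β - x))
      exact this.congr_deriv (by ring)
    refine ⟨_, (f1.sub_const _).sub hd, ?_⟩
    have h1 := S.mono hx' le_rfl ht.1.le (ht.2.trans_lt hhT)
    have h2 := FF_mono S.ha (S.nonneg 0 ⟨le_rfl, S.hT⟩ x hx') h1
    have h4 := mul_le_mul_of_nonneg_left h2 (S.V_nonneg x hx')
    have h5 : (x - α) * (β - x) ≤ 2 * 2 := by
      have := hx.1; have := hx.2
      apply mul_le_mul <;> linarith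
    have h6 := mul_le_mul_of_nonneg_left h5 hc.le
    have h7 : c * t ≤ c * 1 := mul_le_mul_of_nonneg_left (ht.2.trans hh1) hc.le
    linarith

lemma midLow (S : Sol a V T u) {α β c : ℝ} (hα : -1 ≤ α) (hβ : β ≤ 1) (hαβ : α < β) (hc : 0 < c)
    (hg : ∀ x ∈ Ioo α β, ∃ d, HasD2 (u 0) d x ∧ c ≤ d + V x * FF a (u 0 x)) {h t0 : ℝ} (hh : 0 < h)
    (hh1 : h ≤ 1) (hhT : t0 + h < T) (ht0 : 0 ≤ t0) (ht0' : t0 ≤ (β - α) ^ 2 / 16) :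
    ∀ t ∈ Icc 0 t0, c / 64 * (β - α) ^ 2 * h ≤ u (t + h) ((α + β) / 2) - u t ((α + β) / 2) := by
  intro t ht
  have hchi := S.startLow hα hβ hc hg hh hh1 (by linarith)
  have hmono : ∀ t ∈ Icc 0 t0, ∀ x ∈ Icc α β, 0 ≤ u (t + h) x - u t x := by
    intro t ht x hx
    have := S.mono (x := x) ⟨by linarith [hx.1], by linarith [hx.2]⟩ ht.1
      (by linarith : t ≤ t + h) (by linarith [ht.2])
    linarith
  have key := minPrinciple
    (fun t x => (u (t + h) x - u t x) - c / 8 * h * ((x - α) * (β - x) - 2 * t)) 0 t0 α β 1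
    ?_ ?_ ?_ ?_ ?_ t ht ((α + β) / 2) ⟨by linarith, by linarith⟩
  · have e : ((α + β) / 2 - α) * (β - (α + β) / 2) = (β - α) ^ 2 / 4 := by ring
    simp only [e] at key
    have h1 : 2 * t ≤ (β - α) ^ 2 / 8 := by linarith [ht.2]
    have h2 := mul_le_mul_of_nonneg_left h1 (mul_pos hc hh).le
    linarith
  · apply (S.diffCont hh le_rfl hhT hα hβ).sub
    fun_prop
  · intro x hx
    have := hchi x hx
    simp only [zero_add, mul_zero, sub_zero]
    linarith
  · intro t ht
    have := hmono t ht α ⟨le_rfl, hαβ.le⟩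
    have h2 := mul_nonneg (mul_pos hc hh).le ht.1
    simp only [sub_self, zero_mul]
    linarith
  · intro t ht
    have := hmono t ht β ⟨hαβ.le, le_rfl⟩
    have h2 := mul_nonneg (mul_pos hc hh).le ht.1
    simp only [sub_self, mul_zero]
    linarith
  · intro t ht x hx hneg hmin
    have hx1 : x ∈ Ioo (-1:ℝ) 1 := ⟨by linarith [hx.1], by linarith [hx.2]⟩
    obtain ⟨d, d', e1, e2, e3⟩ := S.diffSup hh ht.1 (by linarith [ht.2]) hx1
    have h3 := (e1.sub (((chi_D2 α β x).sub_const (2 * t)).const_mul (c / 8 * h))).nonneg hmin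
    have hd : HasDerivAt (fun s => c / 8 * h * ((x - α) * (β - x) - 2 * s))
        (c / 8 * h * (-2)) t := by
      have := (((hasDerivAt_id t).const_mul 2).const_sub ((x - α) * (β - x))).const_mul (c / 8 * h)
      exact this.congr_deriv (by ring)
    refine ⟨_, e2.sub hd, ?_⟩
    linarith

lemma spread (S : Sol a V T u) (heven : ∀ t ∈ Ico 0 T, ∀ x ∈ Icc (-1:ℝ) 1, u t (-x) = u t x)
    {α β c : ℝ} (hα : -1 ≤ α) (hβ : β ≤ 1) (hαβ : α < β) (hc : 0 < c)
    (hg : ∀ x ∈ Ioo α β, ∃ d, HasD2 (u 0) d x ∧ c ≤ d + V x * FF a (u 0 x)) :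
    ∃ c' t0 h1 : ℝ, 0 < c' ∧ 0 < t0 ∧ t0 ≤ T / 4 ∧ 0 < h1 ∧ t0 + h1 < T ∧ ∀ h ∈ Ioc 0 h1,
      ∀ x ∈ Icc (-1:ℝ) 1, c' * h * (1 - |x|) ≤ u (t0 + h) x - u t0 x := by
  have hT := S.hT
  have hℓ : 0 < β - α := by linarith
  set t0 := min ((β - α) ^ 2 / 16) (T / 4) with ht0d
  have ht0 : 0 < t0 := lt_min (by positivity) (by linarith)
  have ht0a : t0 ≤ (β - α) ^ 2 / 16 := min_le_left _ _
  have ht0b : t0 ≤ T / 4 := min_le_right _ _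
  set h1 := min 1 (T / 4) with hh1d
  have hh1 : 0 < h1 := lt_min (by positivity) (by linarith)
  have hh1a : h1 ≤ 1 := min_le_left _ _
  have hh1b : h1 ≤ T / 4 := min_le_right _ _
  set p := -|(α + β) / 2| with hp
  have hp1 : -1 ≤ p := by
    rw [hp, neg_le_neg_iff, abs_le]; constructor <;> linarith
  have hp0 : p ≤ 0 := by rw [hp]; simp
  set c' := c / 64 * (β - α) ^ 2 * Real.exp (-((1 - p) ^ 2 / (t0 - 0))) * ((1 - p) / (t0 - 0)) with hc'
  have hc'0 : 0 < c' := by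
    have : 0 < 1 - p := by linarith
    have : 0 < t0 - 0 := by linarith
    positivity
  have hmid : (α + β) / 2 ∈ Icc (-1:ℝ) 1 := ⟨by linarith, by linarith⟩
  have hup : ∀ t ∈ Ico 0 T, u t p = u t ((α + β) / 2) := by
    intro t ht
    rcases abs_choice ((α + β) / 2) with h | h
    · rw [hp, h]; exact heven t ht _ hmid
    · rw [hp, h, neg_neg]
  refine ⟨c', t0, h1, hc'0, ht0, ht0b, hh1, by linarith, ?_⟩
  intro h hh x hx
  have hhp : 0 < h := hh.1
  have hht : t0 + h < T := by linarith [hh.2]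
  have hw := wave (fun t x => u (t + h) x - u t x) 0 t0 p 1 (c / 64 * (β - α) ^ 2 * h) ht0
    (by linarith) (by positivity) (S.diffCont hhp le_rfl hht hp1 le_rfl) ?_ ?_ ?_
  · have habs : u (t0 + h) |x| - u t0 |x| = u (t0 + h) x - u t0 x := by
      rcases abs_choice x with h | h
      · rw [h]
      · rw [h, heven _ ⟨by linarith, hht⟩ x hx, heven _ ⟨by linarith, by linarith⟩ x hx]
    have := hw |x| ⟨hp0.trans (abs_nonneg x), abs_le.2 hx⟩
    rw [← habs]
    refine le_trans (le_of_eq ?_) this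
    rw [hc']; ring
  · intro t ht x hx
    have := S.mono (x := x) ⟨by linarith [hx.1], by linarith [hx.2]⟩ ht.1
      (by linarith : t ≤ t + h) (by linarith [ht.2])
    linarith
  · intro t ht
    have := S.midLow hα hβ hαβ hc hg hhp (by linarith [hh.2]) hht ht0.le ht0a t ht
    rw [hup _ ⟨by linarith [ht.1], by linarith [ht.2]⟩, hup _ ⟨ht.1, by linarith [ht.2]⟩]
    exact this
  · intro t ht x hx
    exact S.diffSup hhp ht.1 (by linarith [ht.2]) ⟨by linarith [hx.1], hx.2⟩

/-- linear bound near the boundary, from convexity. -/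
lemma upLin (S : Sol a V T u) {t : ℝ} (ht : t ∈ Ioo 0 T) :
    ∃ M, 0 < M ∧ ∀ x ∈ Icc (-1:ℝ) 1, u t x ≤ M * (1 - |x|) := by
  have ht' : t ∈ Ico 0 T := ⟨ht.1.le, ht.2⟩
  obtain ⟨B, hB0, hB⟩ := S.bdd ht'
  set M := V 0 * FF a B + 1 with hM
  have hV0 : 0 ≤ V 0 := S.V_nonneg 0 (by norm_num)
  have hM0 : 0 < M := by have := mul_nonneg hV0 (FF_nonneg (a := a) hB0); linarith
  -- compare with the parabola by looking at a maximum
  have hcv : ConvexOn ℝ (Icc (-1:ℝ) 1) (fun x => u t x + M / 2 * x ^ 2) := by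
    have hD : ∀ x ∈ Ioo (-1:ℝ) 1, HasDerivAt (fun x => u t x + M / 2 * x ^ 2)
        (deriv (u t) x + M * x) x := by
      intro x hx
      have h1 := ((S.reg t ht x hx).2.differentiableAt (by simp)).hasDerivAt
      have h2 := ((hasDerivAt_id x).pow 2).const_mul (M / 2)
      exact (h1.add h2).congr_deriv (by simp; ring)
    apply convexOn_of_deriv2_nonneg (convex_Icc _ _)
    · exact (S.contX ht').add (by fun_prop)
    · rw [interior_Icc]
      exact fun x hx => (hD x hx).differentiableAt.differentiableWithinAt
    · rw [interior_Icc]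
      intro x hx
      have h3 := ((S.reg t ht x hx).2.derivWithin (m := 1) (by norm_num)).differentiableAt (by simp)
      have : DifferentiableAt ℝ (fun x => deriv (u t) x + M * x) x := by fun_prop
      refine (this.congr_of_eventuallyEq ?_).differentiableWithinAt
      filter_upwards [isOpen_Ioo.mem_nhds hx] with y hy using (hD y hy).deriv
    · rw [interior_Icc]
      intro x hx
      have h3 := ((S.reg t ht x hx).2.derivWithin (m := 1) (by norm_num)).differentiableAt (by simp)
      have h4 : HasDerivAt (fun x => deriv (u t) x + M * x) (deriv (deriv (u t)) x + M * 1) x :=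
        h3.hasDerivAt.add ((hasDerivAt_id x).const_mul M)
      have h5 : deriv (fun x => u t x + M / 2 * x ^ 2) =ᶠ[nhds x]
          (fun x => deriv (u t) x + M * x) := by
        filter_upwards [isOpen_Ioo.mem_nhds hx] with y hy using (hD y hy).deriv
      simp only [Function.iterate_succ, Function.iterate_zero, Function.comp, id]
      rw [h5.deriv_eq, h4.deriv]
      have h6 := S.dmono t ht x hx
      rw [S.eq t ht x hx] at h6
      have hx' := Ioo_subset_Icc_self hx
      have h7 := FF_mono S.ha (S.nonneg t ht' x hx') (hB t ⟨ht.1.le, le_rfl⟩ x hx')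
      have h8 := mul_le_mul (S.V_le x hx') h7 (FF_nonneg (S.nonneg t ht' x hx')) hV0
      linarith
  refine ⟨M, hM0, fun x hx => ?_⟩
  have h1 := hcv.2 (show (-1:ℝ) ∈ Icc (-1) 1 by norm_num) (show (1:ℝ) ∈ Icc (-1) 1 by norm_num)
    (show 0 ≤ (1 - x) / 2 by linarith [hx.2]) (show 0 ≤ (1 + x) / 2 by linarith [hx.1]) (by ring)
  simp only [smul_eq_mul, (S.bc t ht').1, (S.bc t ht').2] at h1
  rw [show (1 - x) / 2 * -1 + (1 + x) / 2 * 1 = x by ring] at h1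
  have h2 : u t x ≤ M / 2 * (1 - x ^ 2) := by nlinarith
  have h3 : |x| ≤ 1 := abs_le.2 hx
  have h4 : 1 - x ^ 2 ≤ 2 * (1 - |x|) := by
    have := sq_abs x
    nlinarith [abs_nonneg x, sq_nonneg (1 - |x|)]
  nlinarith

lemma FM (S : Sol a V T u) {c' t0 h1 : ℝ} (hc' : 0 < c') (ht0 : 0 < t0) (ht0T : t0 + h1 < T)
    (hh1 : 0 < h1)
    (H : ∀ h ∈ Ioc 0 h1,
      ∀ x ∈ Icc (-1:ℝ) 1, c' * h * (1 - |x|) ≤ u (t0 + h) x - u t0 x) :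
    ∃ δ > 0, ∀ h ∈ Ioc 0 h1, ∀ t, t0 ≤ t → t + h < T → ∀ x ∈ Icc (-1:ℝ) 1,
      δ * h * FF a (u t x) ≤ u (t + h) x - u t x := by
  have ha := S.ha
  have hV0 : 0 ≤ V 0 := S.V_nonneg 0 (by norm_num)
  obtain ⟨M, hM, hML⟩ := S.upLin (t := t0) ⟨ht0, by linarith⟩
  set L := Real.log (1 + M) ^ a with hL
  have hL0 : 0 ≤ L := Real.rpow_nonneg (log1_nonneg hM.le) _
  refine ⟨c' / (M * L + 1), by positivity, ?_⟩
  set δ := c' / (M * L + 1) with hδ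
  have hδ0 : 0 < δ := by positivity
  have hδ1 : δ * (M * L + 1) = c' := by rw [hδ]; field_simp
  intro h hh t1 ht1 ht1h x hx
  have hhp : 0 < h := hh.1
  obtain ⟨B, hB0, hB⟩ := S.bdd (t1 := t1) ⟨by linarith, by linarith⟩
  have hFc : ContinuousOn (FF a) (Ici 0) := fun z hz =>
    (FF_hasDerivAt ha hz).continuousAt.continuousWithinAt
  have hub : ∀ t ∈ Icc t0 t1, t ∈ Ico 0 T := fun t ht => ⟨by linarith [ht.1], by linarith [ht.2]⟩
  have key := minPrinciple
    (fun t x => (u (t + h) x - u t x) - δ * h * FF a (u t x)) t0 t1 (-1) 1 (V 0 * FD a B + 1)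
    ?_ ?_ ?_ ?_ ?_ t1 ⟨ht1, le_rfl⟩ x hx
  · linarith
  · apply (S.diffCont hhp ht0.le ht1h le_rfl le_rfl).sub
    apply ContinuousOn.mul continuousOn_const
    apply hFc.comp (t := Ici 0)
    · exact S.cont.mono (fun q hq => ⟨hub _ hq.1, hq.2⟩)
    · exact fun q hq => S.nonneg _ (hub _ hq.1) _ hq.2
  · intro x hx
    have h2 := H h hh x hx
    have h3 := hML x hx
    have h0 := S.nonneg t0 ⟨ht0.le, by linarith⟩ x hx
    have h4 : |x| ≤ 1 := abs_le.2 hx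
    have h5 : FF a (u t0 x) ≤ M * (1 - |x|) * L := by
      unfold FF
      have : Real.log (1 + u t0 x) ≤ Real.log (1 + M) :=
        Real.log_le_log (by linarith) (by nlinarith [abs_nonneg x])
      apply mul_le_mul h3 (Real.rpow_le_rpow (log1_nonneg h0) this (by linarith))
        (Real.rpow_nonneg (log1_nonneg h0) _) (mul_nonneg hM.le (by linarith))
    have h6 : δ * h * FF a (u t0 x) ≤ δ * h * (M * (1 - |x|) * L) :=
      mul_le_mul_of_nonneg_left h5 (by positivity)
    have h7 : δ * h * (M * (1 - |x|) * L) ≤ c' * h * (1 - |x|) := by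
      rw [← hδ1]
      have : 0 ≤ δ * h * (1 - |x|) := mul_nonneg (by positivity) (by linarith)
      nlinarith
    linarith
  · intro t ht
    rw [(S.bc t (hub t ht)).1, (S.bc (t + h) ⟨by linarith [ht.1], by linarith [ht.2]⟩).1, FF_zero]
    simp
  · intro t ht
    rw [(S.bc t (hub t ht)).2, (S.bc (t + h) ⟨by linarith [ht.1], by linarith [ht.2]⟩).2, FF_zero]
    simp
  · intro t ht x hx hneg hmin
    have hx' := Ioo_subset_Icc_self hx
    have htI := hub t ⟨ht.1.le, ht.2⟩
    obtain ⟨d1, e1, f1, -⟩ := S.ev (t := t + h) ⟨by linarith [ht.1], by linarith [ht.2]⟩ hx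
    obtain ⟨d2, e2, f2, -⟩ := S.ev (t := t) ⟨by linarith [ht.1], htI.2⟩ hx
    have hu0 := S.nonneg t htI x hx'
    have hu1 := S.nonneg (t + h) ⟨by linarith [ht.1], by linarith [ht.2]⟩ x hx'
    set k := FD a (u t x) with hk
    have hk0 : 0 ≤ k := FD_nonneg ha hu0
    have hmin2 : IsLocalMin (fun y => (u (t + h) y - u t y) - δ * h * (k * u t y)) x := by
      filter_upwards [hmin, isOpen_Ioo.mem_nhds hx] with y hy hyI
      have h2 := FF_tangent ha hu0 (S.nonneg t htI y (Ioo_subset_Icc_self hyI))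
      have h3 := mul_le_mul_of_nonneg_left h2 (mul_pos hδ0 hhp).le
      nlinarith
    have h3 := ((e1.sub e2).sub ((e2.const_mul k).const_mul (δ * h))).nonneg hmin2
    have f3 : HasDerivAt (fun s => FF a (u s x)) (k * (d2 + V x * FF a (u t x))) t :=
      HasDerivAt.comp (h := fun s => u s x) (h₂ := FF a) t (FF_hasDerivAt ha hu0) f2
    refine ⟨_, ((f1.comp_add_const t h).sub f2).sub (f3.const_mul (δ * h)), ?_⟩
    have h4 := FF_tangent ha hu0 hu1
    have h5 := S.V_nonneg x hx'
    have h6 := S.V_le x hx'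
    have h7 : k ≤ FD a B := FD_mono ha hu0 (hB t ⟨htI.1, ht.2⟩ x hx')
    set D := u (t + h) x - u t x - δ * h * FF a (u t x) with hD
    have h8 : V x * k ≤ V 0 * FD a B := mul_le_mul h6 h7 hk0 hV0
    have h9 : (V 0 * FD a B) * D ≤ V x * k * D := mul_le_mul_of_nonpos_right h8 hneg.le
    have h10 : V x * (k * (u (t + h) x - u t x)) ≤ V x * (FF a (u (t + h) x) - FF a (u t x)) :=
      mul_le_mul_of_nonneg_left (by linarith) h5
    have h11 : V x * k * D = V x * (k * (u (t + h) x - u t x)) - δ * h * (k * (V x * FF a (u t x))) := by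
      rw [hD]; ring
    have hneg' : D < 0 := hneg
    linarith

end Sol

namespace Sol
variable {a : ℝ} {V : ℝ → ℝ} {T : ℝ} {u : ℝ → ℝ → ℝ}

lemma stat (S : Sol a V T u) (d0 : ℝ → ℝ) (hd0 : ∀ x ∈ Ioo (-1:ℝ) 1, HasD2 (u 0) (d0 x) x)
    (hle : ∀ x ∈ Ioo (-1:ℝ) 1, d0 x + V x * FF a (u 0 x) ≤ 0) :
    ∀ t ∈ Ico 0 T, ∀ x ∈ Icc (-1:ℝ) 1, u t x ≤ u 0 x := by
  intro t1 ht1 x hx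
  obtain ⟨B, hB0, hB⟩ := S.bdd ht1
  have hub : ∀ t ∈ Icc 0 t1, t ∈ Ico 0 T := fun t ht => ⟨ht.1, ht.2.trans_lt ht1.2⟩
  have hz : (0:ℝ) ∈ Ico 0 T := ⟨le_rfl, S.hT⟩
  have key := minPrinciple (fun t x => u 0 x - u t x) 0 t1 (-1) 1 (V 0 * FD a B + 1) ?_ ?_ ?_ ?_ ?_
    t1 ⟨ht1.1, le_rfl⟩ x hx
  · linarith
  · apply ContinuousOn.sub
    · exact S.cont.comp (f := fun q : ℝ × ℝ => ((0:ℝ), q.2)) (by fun_prop)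
          (fun q hq => ⟨hz, hq.2⟩)
    · exact S.cont.mono (fun q hq => ⟨hub _ hq.1, hq.2⟩)
  · intro x hx; simp
  · intro t ht; simp [(S.bc t (hub t ht)).1, (S.bc 0 hz).1]
  · intro t ht; simp [(S.bc t (hub t ht)).2, (S.bc 0 hz).2]
  · intro t ht x hx hneg hmin
    have htI := hub t ⟨ht.1.le, ht.2⟩
    have hx' := Ioo_subset_Icc_self hx
    obtain ⟨d1, e1, f1, -⟩ := S.ev (t := t) ⟨ht.1, htI.2⟩ hx
    refine ⟨_, f1.const_sub _, ?_⟩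
    have h3 := ((hd0 x hx).sub e1).nonneg hmin
    have hu0 := S.nonneg 0 hz x hx'
    have h4 := FF_lip S.ha hu0 (by linarith : u 0 x ≤ u t x) (hB t ⟨ht.1.le, ht.2⟩ x hx')
    have h7 := S.V_nonneg x hx'
    have h8 := S.V_le x hx'
    have h9 := FD_nonneg S.ha hB0
    have h10 : V x * (FF a (u t x) - FF a (u 0 x)) ≤ V 0 * (FD a B * (u t x - u 0 x)) :=
      (mul_le_mul_of_nonneg_left h4 h7).trans
        (mul_le_mul_of_nonneg_right h8 (mul_nonneg h9 (by linarith)))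
    have := hle x hx
    nlinarith

end Sol

lemma z_deriv {a : ℝ} {m : ℝ → ℝ} {m' t : ℝ} (hm : 0 < m t) (hd : HasDerivAt m m' t) :
    HasDerivAt (fun s => Real.log (1 + m s) ^ (1 - a))
      (-(a - 1) * (Real.log (1 + m t) ^ (-a) * (m' / (1 + m t)))) t := by
  have h1 := ((hd.const_add 1).log (by linarith : 1 + m t ≠ 0))
  have hl : 0 < Real.log (1 + m t) := Real.log_pos (by linarith)
  have h2 := h1.rpow_const (p := 1 - a) (Or.inl hl.ne')
  refine h2.congr_deriv ?_
  rw [show 1 - a - 1 = -a by ring]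
  ring

lemma z_inv {a y : ℝ} (ha : 1 < a) (hy : 0 < y) : (y ^ (1 - a)) ^ (-(1 / (a - 1))) = y := by
  rw [← Real.rpow_mul hy.le]
  have : (1 - a) * -(1 / (a - 1)) = 1 := by
    have : a - 1 ≠ 0 := by linarith
    field_simp; ring
  rw [this, Real.rpow_one]

lemma ode_upper {a δ m0 t0 T : ℝ} {m m' : ℝ → ℝ} (ha : 1 < a) (hδ : 0 < δ) (hm0 : 0 < m0)
    (hm : ∀ t ∈ Ioo t0 T, m0 ≤ m t) (hd : ∀ t ∈ Ioo t0 T, HasDerivAt m (m' t) t)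
    (hin : ∀ t ∈ Ioo t0 T, δ * FF a (m t) ≤ m' t) :
    ∃ C > 0, ∀ t ∈ Ioo t0 T, m t ≤ Real.exp (C * (T - t) ^ (-(1 / (a - 1)))) := by
  set k := (a - 1) * (δ * (m0 / (1 + m0))) with hk
  have hk0 : 0 < k := by have : 0 < a - 1 := by linarith
                         positivity
  refine ⟨k ^ (-(1 / (a - 1))), by positivity, fun t ht => ?_⟩
  have hpos : ∀ t ∈ Ioo t0 T, 0 < m t := fun t ht => hm0.trans_le (hm t ht)
  have hz := fun t (ht : t ∈ Ioo t0 T) => z_deriv (a := a) (hpos t ht) (hd t ht)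
  have hMVT := (convex_Ioo t0 T).image_sub_le_mul_sub_of_deriv_le (C := -k)
    (f := fun s => Real.log (1 + m s) ^ (1 - a))
    (fun s hs => (hz s hs).continuousAt.continuousWithinAt)
    (by rw [interior_Ioo]; exact fun s hs => (hz s hs).differentiableAt.differentiableWithinAt)
    (by
      rw [interior_Ioo]
      intro s hs
      rw [(hz s hs).deriv]
      have hms := hpos s hs
      have hl : 0 < Real.log (1 + m s) := Real.log_pos (by linarith)
      have h1 : δ * (m0 / (1 + m0)) ≤ Real.log (1 + m s) ^ (-a) * (m' s / (1 + m s)) := by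
        have h2 : m0 / (1 + m0) ≤ m s / (1 + m s) := by
          rw [div_le_div_iff₀ (by linarith) (by linarith)]; nlinarith [hm s hs]
        have h3 : Real.log (1 + m s) ^ (-a) * (δ * FF a (m s) / (1 + m s)) = δ * (m s / (1 + m s)) := by
          unfold FF
          have h4 : Real.log (1 + m s) ^ (-a) * Real.log (1 + m s) ^ a = 1 := by
            rw [← Real.rpow_add hl]; simp
          calc _ = (Real.log (1 + m s) ^ (-a) * Real.log (1 + m s) ^ a) * (δ * (m s / (1 + m s))) := by ring
            _ = _ := by rw [h4, one_mul]
        have h5 : Real.log (1 + m s) ^ (-a) * (δ * FF a (m s) / (1 + m s)) ≤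
            Real.log (1 + m s) ^ (-a) * (m' s / (1 + m s)) := by
          have := hin s hs
          gcongr
        have := mul_le_mul_of_nonneg_left h2 hδ.le
        linarith
      have := mul_le_mul_of_nonneg_left h1 (by linarith : 0 ≤ a - 1)
      rw [hk]; linarith)
  have hl : 0 < Real.log (1 + m t) := Real.log_pos (by linarith [hpos t ht])
  have hlow : k * (T - t) ≤ Real.log (1 + m t) ^ (1 - a) := by
    have h1 : ∀ s ∈ Ioo t T, s ≤ t + Real.log (1 + m t) ^ (1 - a) / k := by
      intro s hs
      have hs' : s ∈ Ioo t0 T := ⟨ht.1.trans hs.1, hs.2⟩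
      have h2 := hMVT t ht s hs' hs.1.le
      have h3 : 0 ≤ Real.log (1 + m s) ^ (1 - a) :=
        Real.rpow_nonneg (log1_nonneg (hpos s hs').le) _
      have h4 : s - t ≤ Real.log (1 + m t) ^ (1 - a) / k := by
        rw [le_div_iff₀ hk0]; linarith
      linarith
    have h2 : T ≤ t + Real.log (1 + m t) ^ (1 - a) / k := by
      by_contra hcon
      push Not at hcon
      obtain ⟨s, hs1, hs2⟩ := exists_between (max_lt hcon ht.2)
      have := h1 s ⟨(le_max_right _ _).trans_lt hs1, hs2⟩
      linarith [(le_max_left _ t).trans_lt hs1]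
    have h3 : T - t ≤ Real.log (1 + m t) ^ (1 - a) / k := by linarith
    rw [le_div_iff₀ hk0] at h3
    linarith
  have hτ : 0 < T - t := by linarith [ht.2]
  have hp : -(1 / (a - 1)) ≤ 0 := by
    have : 0 < a - 1 := by linarith
    have : 0 < 1 / (a - 1) := by positivity
    linarith
  have h5 := Real.rpow_le_rpow_of_nonpos (mul_pos hk0 hτ) hlow hp
  rw [z_inv ha hl, Real.mul_rpow hk0.le hτ.le] at h5
  calc m t ≤ 1 + m t := by linarith
    _ = Real.exp (Real.log (1 + m t)) := (Real.exp_log (by linarith [hpos t ht])).symm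
    _ ≤ _ := Real.exp_le_exp.2 h5

lemma ode_lower {a A T : ℝ} {m m' : ℝ → ℝ} (ha : 1 < a) (hA : 0 < A)
    (hpos : ∀ t ∈ Ioo 0 T, 0 < m t) (hd : ∀ t ∈ Ioo 0 T, HasDerivAt m (m' t) t)
    (hin : ∀ t ∈ Ioo 0 T, m' t ≤ A * FF a (m t))
    (hb : ∀ M : ℝ, ∀ t < T, ∃ s ∈ Ioo t T, M < m s) :
    ∃ C > 0, ∀ t ∈ Ioo 0 T, Real.exp (C * (T - t) ^ (-(1 / (a - 1)))) - 1 ≤ m t := by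
  have ha' : 0 < a - 1 := by linarith
  set k := (a - 1) * A with hk
  have hk0 : 0 < k := by positivity
  refine ⟨k ^ (-(1 / (a - 1))), by positivity, fun t ht => ?_⟩
  have hz := fun t (ht : t ∈ Ioo 0 T) => z_deriv (a := a) (hpos t ht) (hd t ht)
  have hMVT := (convex_Ioo 0 T).mul_sub_le_image_sub_of_le_deriv (C := -k)
    (f := fun s => Real.log (1 + m s) ^ (1 - a))
    (fun s hs => (hz s hs).continuousAt.continuousWithinAt)
    (by rw [interior_Ioo]; exact fun s hs => (hz s hs).differentiableAt.differentiableWithinAt)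
    (by
      rw [interior_Ioo]
      intro s hs
      rw [(hz s hs).deriv]
      have hms := hpos s hs
      have hl : 0 < Real.log (1 + m s) := Real.log_pos (by linarith)
      have h1 : Real.log (1 + m s) ^ (-a) * (m' s / (1 + m s)) ≤ A := by
        have h2 : m s / (1 + m s) ≤ 1 := by
          rw [div_le_one (by linarith)]; linarith
        have h3 : Real.log (1 + m s) ^ (-a) * (A * FF a (m s) / (1 + m s)) = A * (m s / (1 + m s)) := by
          unfold FF
          have h4 : Real.log (1 + m s) ^ (-a) * Real.log (1 + m s) ^ a = 1 := by
            rw [← Real.rpow_add hl]; simp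
          calc _ = (Real.log (1 + m s) ^ (-a) * Real.log (1 + m s) ^ a) * (A * (m s / (1 + m s))) := by ring
            _ = _ := by rw [h4, one_mul]
        have h5 : Real.log (1 + m s) ^ (-a) * (m' s / (1 + m s)) ≤
            Real.log (1 + m s) ^ (-a) * (A * FF a (m s) / (1 + m s)) := by
          have := hin s hs
          gcongr
        have := mul_le_mul_of_nonneg_left h2 hA.le
        linarith
      have := mul_le_mul_of_nonneg_left h1 ha'.le
      rw [hk]; linarith)
  have hl : 0 < Real.log (1 + m t) := Real.log_pos (by linarith [hpos t ht])
  have hτ : 0 < T - t := by linarith [ht.2]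
  have hup : Real.log (1 + m t) ^ (1 - a) ≤ k * (T - t) := by
    apply le_of_forall_pos_le_add
    intro ε hε
    obtain ⟨s, hs, hMs⟩ := hb (Real.exp (ε ^ (-(1 / (a - 1)))) - 1) t ht.2
    have hs' : s ∈ Ioo 0 T := ⟨ht.1.trans hs.1, hs.2⟩
    have h2 := hMVT t ht s hs' hs.1.le
    have h6 : 0 < ε ^ (-(1 / (a - 1))) := Real.rpow_pos_of_pos hε _
    have h3 : ε ^ (-(1 / (a - 1))) ≤ Real.log (1 + m s) := by
      rw [Real.le_log_iff_exp_le (by linarith [hpos s hs'])]; linarith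
    have h4 := Real.rpow_le_rpow_of_nonpos h6 h3 (by linarith : 1 - a ≤ 0)
    rw [← Real.rpow_mul hε.le] at h4
    have h5 : -(1 / (a - 1)) * (1 - a) = 1 := by field_simp; ring
    rw [h5, Real.rpow_one] at h4
    have h7 := mul_le_mul_of_nonneg_left (by linarith [hs.2] : s - t ≤ T - t) hk0.le
    linarith
  have hp : -(1 / (a - 1)) ≤ 0 := by
    have : 0 < 1 / (a - 1) := by positivity
    linarith
  have h5 := Real.rpow_le_rpow_of_nonpos (Real.rpow_pos_of_pos hl _) hup hp
  rw [z_inv ha hl, Real.mul_rpow hk0.le hτ.le] at h5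
  have h6 := Real.exp_le_exp.2 h5
  rw [Real.exp_log (by linarith [hpos t ht])] at h6
  linarith

lemma final_const {p c T : ℝ} (hp : 1 < p) (hc : 0 < c) (hT : 0 < T) :
    ∃ C > 0, ∀ τ ∈ Ioo 0 (T / 2), C * Real.exp (C * τ ^ (-p)) ≤
      (Real.exp (c * τ ^ (-p)) - 1) * Real.exp (-(1 / τ)) * (1 / τ) := by
  set s0 := (T / 2) ^ (-p) with hs0
  have hs0p : 0 < s0 := Real.rpow_pos_of_pos (by linarith) _
  set κ := 1 - Real.exp (-(c * s0)) with hκ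
  have hκ0 : 0 < κ := by
    have : Real.exp (-(c * s0)) < 1 := by
      rw [Real.exp_lt_one_iff]; have := mul_pos hc hs0p; linarith
    linarith
  set τ1 := (c / 2) ^ (1 / (p - 1)) with hτ1
  have hτpos_one : 0 < τ1 := Real.rpow_pos_of_pos (by linarith) _
  set K := 1 / τ1 with hK
  have hK0 : 0 < K := by positivity
  set C := min (κ * Real.exp (-K) * (2 / T)) (c / 2) with hC
  have hC0 : 0 < C := lt_min (by positivity) (by positivity)
  refine ⟨C, hC0, fun τ hτ => ?_⟩
  have hτ0 : 0 < τ := hτ.1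
  set s := τ ^ (-p) with hs
  have hs_pos : 0 < s := Real.rpow_pos_of_pos hτ0 _
  have hss : s0 ≤ s := Real.rpow_le_rpow_of_nonpos hτ0 hτ.2.le (by linarith)
  have h1 : κ * Real.exp (c * s) ≤ Real.exp (c * s) - 1 := by
    have h2 : Real.exp (-(c * s)) ≤ Real.exp (-(c * s0)) := by
      rw [Real.exp_le_exp]; have := mul_le_mul_of_nonneg_left hss hc.le; linarith
    have h3 : Real.exp (-(c * s)) * Real.exp (c * s) = 1 := by rw [← Real.exp_add]; simp
    have h4 := mul_le_mul_of_nonneg_right h2 (Real.exp_pos (c * s)).le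
    rw [hκ]; linarith
  have h2 : 1 / τ ≤ c / 2 * s + K := by
    rcases le_total τ τ1 with h | h
    · have h3 : τ ^ (p - 1) ≤ c / 2 := by
        have := Real.rpow_le_rpow hτ0.le h (by linarith : 0 ≤ p - 1)
        rw [hτ1, ← Real.rpow_mul (by linarith)] at this
        have h5 : 1 / (p - 1) * (p - 1) = 1 := by
          have : p - 1 ≠ 0 := by linarith
          field_simp
        rwa [h5, Real.rpow_one] at this
      have h4 : 1 / τ = τ ^ (p - 1) * s := by
        rw [hs, ← Real.rpow_add hτ0, show p - 1 + -p = -1 by ring, Real.rpow_neg_one, one_div]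
      have := mul_le_mul_of_nonneg_right h3 hs_pos.le
      linarith
    · have h3 : 1 / τ ≤ K := one_div_le_one_div_of_le hτpos_one h
      have := mul_pos hc hs_pos
      linarith
  have h3 : Real.exp (-K) * Real.exp (-(c / 2 * s)) ≤ Real.exp (-(1 / τ)) := by
    rw [← Real.exp_add, Real.exp_le_exp]; linarith
  have h4 : 2 / T ≤ 1 / τ := by
    rw [div_le_div_iff₀ hT hτ0]; linarith [hτ.2]
  have h5 : Real.exp (C * s) ≤ Real.exp (c / 2 * s) := by
    rw [Real.exp_le_exp]; exact mul_le_mul_of_nonneg_right (min_le_right _ _) hs_pos.le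
  calc C * Real.exp (C * s) ≤ (κ * Real.exp (-K) * (2 / T)) * Real.exp (c / 2 * s) :=
        mul_le_mul (min_le_left _ _) h5 (Real.exp_pos _).le (by positivity)
    _ = (κ * Real.exp (c * s)) * (Real.exp (-K) * Real.exp (-(c / 2 * s))) * (2 / T) := by
        have : Real.exp (c / 2 * s) = Real.exp (c * s) * Real.exp (-(c / 2 * s)) := by
          rw [← Real.exp_add]; congr 1; ring
        rw [this]; ring
    _ ≤ _ := by
        have : 0 ≤ Real.exp (c * s) - 1 := le_trans (by positivity) h1
        gcongr

/-- Consequence of the shape assumptions on `V` and `φ`. -/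
lemma shape {G : ℝ → ℝ} (hC1 : ContDiffOn ℝ 1 G (Icc (-1) 1))
    (heven : ∀ x ∈ Icc (-1:ℝ) 1, G (-x) = G x)
    (hG' : ∀ x ∈ Icc (0:ℝ) (1/3), derivWithin G (Icc (-1) 1) x ≤ 0)
    (hbd : ∀ x ∈ Icc (1/3:ℝ) 1, G x ≤ G (1/3)) {p q : ℝ} (hp : |p| ≤ 1 / 3) (hpq : |p| ≤ |q|)
    (hq : |q| ≤ 1) : G q ≤ G p := by
  have habs : ∀ x, |x| ≤ 1 → G |x| = G x := by
    intro x hx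
    rcases abs_choice x with h | h
    · rw [h]
    · rw [h, heven x (abs_le.1 hx)]
  have hanti : AntitoneOn G (Icc 0 (1/3)) := by
    apply antitoneOn_of_deriv_nonpos (convex_Icc _ _)
    · exact hC1.continuousOn.mono (Icc_subset_Icc (by norm_num) (by norm_num))
    · rw [interior_Icc]
      intro x hx
      have := (hC1.differentiableOn (by simp)) x ⟨by linarith [hx.1], by linarith [hx.2]⟩
      exact this.mono (fun y hy => ⟨by linarith [hy.1], by linarith [hy.2]⟩)
    · rw [interior_Icc]
      intro x hx
      rw [← derivWithin_of_mem_nhds (Icc_mem_nhds (by linarith [hx.1] : -1 < x)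
        (by linarith [hx.2] : x < 1))]
      exact hG' x ⟨hx.1.le, hx.2.le⟩
  rw [← habs q hq, ← habs p (by linarith)]
  rcases le_total |q| (1/3) with h | h
  · exact hanti ⟨abs_nonneg _, hp⟩ ⟨abs_nonneg _, h⟩ hpq
  · exact (hbd _ ⟨h, hq⟩).trans (hanti ⟨abs_nonneg _, hp⟩ ⟨by norm_num, le_rfl⟩ hp)

lemma HasD2.congr {f g : ℝ → ℝ} {f2 x : ℝ} (hf : HasD2 f f2 x) (h : g =ᶠ[nhds x] f) :
    HasD2 g f2 x := by
  obtain ⟨f1, a, b⟩ := hf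
  refine ⟨f1, ?_, b⟩
  filter_upwards [a, h.eventually_nhds] with y h1 h2 using h1.congr_of_eventuallyEq h2

theorem stmt18
    (a : ℝ) (ha1 : 1 < a) (ha2 : a < 2)
    (V φ : ℝ → ℝ)
    (hV_C1 : ContDiffOn ℝ 1 V (Icc (-1) 1)) (hφ_C1 : ContDiffOn ℝ 1 φ (Icc (-1) 1))
    (hV_nonneg : ∀ x ∈ Icc (-1:ℝ) 1, 0 ≤ V x) (hφ_nonneg : ∀ x ∈ Icc (-1:ℝ) 1, 0 ≤ φ x)
    (hV_even : ∀ x ∈ Icc (-1:ℝ) 1, V (-x) = V x) (hφ_even : ∀ x ∈ Icc (-1:ℝ) 1, φ (-x) = φ x)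
    (hV0 : 0 < V 0) (hφ0 : 0 < φ 0) (hφ1 : φ 1 = 0)
    (hV' : ∀ x ∈ Icc (0:ℝ) (1/3), derivWithin V (Icc (-1) 1) x ≤ 0)
    (hφ' : ∀ x ∈ Icc (0:ℝ) (1/3), derivWithin φ (Icc (-1) 1) x ≤ 0)
    (hVbd : ∀ x ∈ Icc (1/3:ℝ) 1, V x ≤ V (1/3))
    (hφbd : ∀ x ∈ Icc (1/3:ℝ) 1, φ x ≤ φ (1/3))
    (hφ_C2 : ContDiffOn ℝ 2 φ (Icc (-1) 1))
    (r : ℝ) (hr : r ∈ Ioo (0:ℝ) 1)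
    (hφpos : ∀ x ∈ Icc (0:ℝ) r, 0 < φ x) (hVpos : ∀ x ∈ Icc (0:ℝ) r, 0 < V x)
    (hφ'' : ∀ x ∈ Icc r (1:ℝ), 0 ≤ iteratedDerivWithin 2 φ (Icc (-1) 1) x)
    (lam : ℝ) (hlam : 0 < lam)
    (T : ℝ) (hT : 0 < T)
    (u : ℝ → ℝ → ℝ)
    (hu_cont : ContinuousOn (fun q : ℝ × ℝ => u q.1 q.2) (Ico 0 T ×ˢ Icc (-1) 1))
    (hu_nonneg : ∀ t ∈ Ico 0 T, ∀ x ∈ Icc (-1:ℝ) 1, 0 ≤ u t x)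
    (hu_reg : ∀ t ∈ Ioo 0 T, ∀ x ∈ Ioo (-1:ℝ) 1,
      DifferentiableAt ℝ (fun s => u s x) t ∧ ContDiffAt ℝ 2 (u t) x)
    (heq : ∀ t ∈ Ioo 0 T, ∀ x ∈ Ioo (-1:ℝ) 1,
      deriv (fun s => u s x) t = deriv (deriv (u t)) x + V x * (u t x * Real.log (1 + u t x) ^ a))
    (hbc : ∀ t ∈ Ioo 0 T, u t (-1) = 0 ∧ u t 1 = 0)
    (hic : ∀ x ∈ Icc (-1:ℝ) 1, u 0 x = lam * φ x)
    (hmono : ∀ t ∈ Ioo 0 T, ∀ x ∈ Ioo (-1:ℝ) 1, 0 ≤ deriv (fun s => u s x) t)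
    (hblow : ∀ M : ℝ, ∀ δ > 0, ∃ t, T - δ < t ∧ t < T ∧ ∃ x ∈ Icc (-1:ℝ) 1, M < u t x)
    :
    ∃ C₁ C₂ : ℝ, 0 < C₁ ∧ C₁ ≤ C₂ ∧
      ∀ t ∈ Ioo (T / 2) T, ∀ x ∈ Ioo (-1:ℝ) 1,
        C₁ * (1 - |x|) * Real.exp (C₁ * (T - t) ^ (-(1 / (a - 1)))) ≤ u t x ∧
        u t x ≤ u t 0 ∧
        u t 0 ≤ Real.exp (C₂ * (T - t) ^ (-(1 / (a - 1)))) := by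
  have ha : 1 < a := ha1
  have shV := fun {p q : ℝ} => shape (p := p) (q := q) hV_C1 hV_even hV' hVbd
  have shφ := fun {p q : ℝ} => shape (p := p) (q := q) hφ_C1 hφ_even hφ' hφbd
  have hz : (0:ℝ) ∈ Ico 0 T := ⟨le_rfl, hT⟩
  have S : Sol a V T u :=
    { ha := ha1
      hT := hT
      V_nonneg := hV_nonneg
      V_le := fun x hx => shV (by norm_num) (by simp) (abs_le.2 hx)
      cont := hu_cont
      nonneg := hu_nonneg
      reg := hu_reg
      eq := heq
      bc := by
        intro t ht
        rcases ht.1.eq_or_lt with h | h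
        · subst h
          rw [hic (-1) (by norm_num), hic 1 (by norm_num), hφ_even 1 (by norm_num), hφ1]
          simp
        · exact hbc t ⟨h, ht.2⟩
      dmono := hmono }
  -- symmetry
  have hev1 : ∀ t ∈ Ico 0 T, ∀ x ∈ Icc (-1:ℝ) 1, u t x ≤ u t (-x) := by
    have := S.reflect 0 (-1) 1 le_rfl le_rfl (by norm_num) (by norm_num)
      (fun x hx => by rw [zero_sub, hV_even x hx])
      (fun x hx => by
        rw [zero_sub, hic x hx, hic (-x) ⟨by linarith [hx.2], by linarith [hx.1]⟩, hφ_even x hx])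
      (fun t ht => by rw [(S.bc t ht).1]; norm_num [(S.bc t ht).2])
      (fun t ht => by rw [(S.bc t ht).2]; norm_num [(S.bc t ht).1])
    intro t ht x hx
    simpa using this t ht x hx
  have heven : ∀ t ∈ Ico 0 T, ∀ x ∈ Icc (-1:ℝ) 1, u t (-x) = u t x := by
    intro t ht x hx
    apply le_antisymm _ (hev1 t ht x hx)
    simpa using hev1 t ht (-x) ⟨by linarith [hx.2], by linarith [hx.1]⟩
  -- reflection at 1/3
  have hR1 : ∀ t ∈ Ico 0 T, ∀ x ∈ Icc (1/3:ℝ) 1, u t x ≤ u t (2/3 - x) := by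
    have haux : ∀ x ∈ Icc (1/3:ℝ) 1, |2/3 - x| ≤ 1/3 ∧ |2/3 - x| ≤ |x| ∧ |x| ≤ 1 := by
      intro x hx
      have h1 : |2/3 - x| ≤ 1/3 := abs_le.2 ⟨by linarith [hx.2], by linarith [hx.1]⟩
      have h2 : |x| = x := abs_of_nonneg (by linarith [hx.1])
      rw [h2]
      exact ⟨h1, by linarith [hx.1], hx.2⟩
    apply S.reflect (2/3) (1/3) 1 (by norm_num) (by norm_num) (by norm_num) (by norm_num)
    · intro x hx
      obtain ⟨h1, h2, h3⟩ := haux x hx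
      exact shV h1 h2 h3
    · intro x hx
      obtain ⟨h1, h2, h3⟩ := haux x hx
      rw [hic x (abs_le.1 h3), hic (2/3 - x) (abs_le.1 (h2.trans h3))]
      exact mul_le_mul_of_nonneg_left (shφ h1 h2 h3) hlam.le
    · intro t ht; norm_num
    · intro t ht
      rw [(S.bc t ht).2]
      exact S.nonneg t ht _ (by norm_num)
  have hR2 : ∀ t ∈ Ico 0 T, ∀ y ∈ Icc (0:ℝ) (2/3), u t y ≤ u t 0 := by
    intro t ht y hy
    have hy0 := hy.1
    have hy1 := hy.2
    have haux : ∀ x ∈ Icc (y/2) (y/2 + 1/3), |y - x| ≤ 1/3 ∧ |y - x| ≤ |x| ∧ |x| ≤ 1 := by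
      intro x hx
      have h0 := hx.1
      have h0' := hx.2
      have h2 : |x| = x := abs_of_nonneg (by linarith)
      rw [h2]
      exact ⟨abs_le.2 ⟨by linarith, by linarith⟩, abs_le.2 ⟨by linarith, by linarith⟩, by linarith⟩
    have key := S.reflect y (y/2) (y/2 + 1/3) (by linarith) (by linarith) (by linarith) (by linarith)
      ?_ ?_ ?_ ?_ t ht y ⟨by linarith, by linarith⟩
    · simpa using key
    · intro x hx
      obtain ⟨h1, h2, h3⟩ := haux x hx
      exact shV h1 h2 h3
    · intro x hx
      obtain ⟨h1, h2, h3⟩ := haux x hx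
      rw [hic x (abs_le.1 h3), hic (y - x) (abs_le.1 (h2.trans h3))]
      exact mul_le_mul_of_nonneg_left (shφ h1 h2 h3) hlam.le
    · intro t ht
      rw [show y - y / 2 = y / 2 by ring]
    · intro t ht
      have h1 := hR1 t ht (y/2 + 1/3) ⟨by linarith, by linarith⟩
      rw [show y - (y / 2 + 1 / 3) = -(2/3 - (y/2 + 1/3)) by ring,
        heven t ht _ ⟨by linarith, by linarith⟩]
      exact h1
  have hmax : ∀ t ∈ Ico 0 T, ∀ x ∈ Icc (-1:ℝ) 1, u t x ≤ u t 0 := by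
    intro t ht
    have hpos : ∀ x ∈ Icc (0:ℝ) 1, u t x ≤ u t 0 := by
      intro x hx
      rcases le_total x (2/3) with h | h
      · exact hR2 t ht x ⟨hx.1, h⟩
      · refine (hR1 t ht x ⟨by linarith, hx.2⟩).trans ?_
        rw [show 2/3 - x = -(x - 2/3) by ring, heven t ht _ ⟨by linarith, by linarith [hx.2]⟩]
        exact hR2 t ht _ ⟨by linarith, by linarith [hx.2]⟩
    intro x hx
    rcases le_total 0 x with h | h
    · exact hpos x ⟨h, hx.2⟩
    · rw [← heven t ht x hx]
      exact hpos (-x) ⟨by linarith, by linarith [hx.1]⟩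
  -- the value at the origin
  have h0I : (0:ℝ) ∈ Ioo (-1:ℝ) 1 := by norm_num
  have h0C : (0:ℝ) ∈ Icc (-1:ℝ) 1 := by norm_num
  have hm0 : 0 < lam * φ 0 := mul_pos hlam hφ0
  have hmpos : ∀ t ∈ Ico 0 T, lam * φ 0 ≤ u t 0 := by
    intro t ht
    rw [← hic 0 h0C]
    exact S.mono h0C le_rfl ht.1 ht.2
  have hmd : ∀ t ∈ Ioo 0 T, HasDerivAt (fun s => u s 0) (deriv (fun s => u s 0) t) t :=
    fun t ht => (hu_reg t ht 0 h0I).1.hasDerivAt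
  have hbl : ∀ M : ℝ, ∀ t < T, ∃ s ∈ Ioo t T, M < u s 0 := by
    intro M t ht
    obtain ⟨s, hs1, hs2, x, hx, hM⟩ := hblow M (min (T - t) T) (lt_min (by linarith) hT)
    have h1 := min_le_left (T - t) T
    have h2 := min_le_right (T - t) T
    exact ⟨s, ⟨by linarith, hs2⟩, hM.trans_le (hmax s ⟨by linarith, hs2⟩ x hx)⟩
  obtain ⟨c, hc, hclow⟩ := ode_lower (a := a) (A := V 0) (T := T) (m := fun s => u s 0)
    (m' := fun t => deriv (fun s => u s 0) t) ha hV0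
    (fun t ht => hm0.trans_le (hmpos t ⟨ht.1.le, ht.2⟩)) hmd
    (by
      intro t ht
      obtain ⟨d, e, f, -⟩ := S.ev ht h0I
      have hneg : HasD2 (fun y => (-1) * u t y) ((-1) * d) 0 := e.const_mul (-1)
      have h1 := hneg.nonneg (by
        filter_upwards [isOpen_Ioo.mem_nhds h0I] with y hy
        linarith [hmax t ⟨ht.1.le, ht.2⟩ y (Ioo_subset_Icc_self hy)])
      rw [f.deriv]
      linarith) hbl
  -- strict positivity of the initial time derivative somewhere
  have hφat : ∀ x ∈ Ioo (-1:ℝ) 1, ContDiffAt ℝ 2 φ x := fun x hx =>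
    hφ_C2.contDiffAt (Icc_mem_nhds hx.1 hx.2)
  have hu0e : ∀ x ∈ Ioo (-1:ℝ) 1, u 0 =ᶠ[nhds x] fun y => lam * φ y := by
    intro x hx
    filter_upwards [isOpen_Ioo.mem_nhds hx] with y hy using hic y (Ioo_subset_Icc_self hy)
  have hD0 : ∀ x ∈ Ioo (-1:ℝ) 1, HasD2 (u 0) (lam * deriv (deriv φ) x) x := fun x hx =>
    ((HasD2.of_contDiffAt (hφat x hx)).const_mul lam).congr (hu0e x hx)
  have hex : ∃ x ∈ Ioo (-1:ℝ) 1, 0 < lam * deriv (deriv φ) x + V x * FF a (u 0 x) := by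
    by_contra hcon
    push Not at hcon
    have hst := S.stat _ hD0 hcon
    obtain ⟨s, hs, hM⟩ := hbl (u 0 0) 0 hT
    linarith [hst s ⟨hs.1.le, hs.2⟩ 0 h0C]
  obtain ⟨x1, hx1, hgx1⟩ := hex
  have hgc : ContinuousAt (fun x => lam * deriv (deriv φ) x + V x * FF a (u 0 x)) x1 := by
    apply ContinuousAt.add
    · have h1 : ContDiffAt ℝ 1 (deriv φ) x1 := (hφat x1 hx1).derivWithin (by norm_num)
      have h2 : ContDiffAt ℝ 0 (deriv (deriv φ)) x1 := h1.derivWithin (by norm_num)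
      exact continuousAt_const.mul h2.continuousAt
    · apply ContinuousAt.mul
      · exact (hV_C1.contDiffAt (Icc_mem_nhds hx1.1 hx1.2)).continuousAt
      · have h1 : ContinuousAt (u 0) x1 := (S.contX hz).continuousAt (Icc_mem_nhds hx1.1 hx1.2)
        exact ContinuousAt.comp (f := u 0) (g := FF a)
          (FF_hasDerivAt ha (S.nonneg 0 hz x1 (Ioo_subset_Icc_self hx1))).continuousAt h1
  obtain ⟨ε, hε, hball⟩ := Metric.eventually_nhds_iff_ball.1
    ((hgc.eventually (lt_mem_nhds (half_lt_self hgx1))).and (isOpen_Ioo.mem_nhds hx1))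
  rw [Real.ball_eq_Ioo] at hball
  set g1 := (lam * deriv (deriv φ) x1 + V x1 * FF a (u 0 x1)) / 2 with hg1
  have hα1 : -1 ≤ x1 - ε / 2 := (hball (x1 - ε / 2) ⟨by linarith, by linarith⟩).2.1.le
  have hβ1 : x1 + ε / 2 ≤ 1 := (hball (x1 + ε / 2) ⟨by linarith, by linarith⟩).2.2.le
  obtain ⟨c', t0, h1, hc', ht0, ht0T, hh1, hth1, hspr⟩ := S.spread heven hα1 hβ1 (by linarith)
    (c := g1) (by rw [hg1]; linarith) (by
      intro x hx
      have hb := hball x ⟨by linarith [hx.1], by linarith [hx.2]⟩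
      exact ⟨_, hD0 x hb.2, hb.1.le⟩)
  obtain ⟨δ, hδ, hFM⟩ := S.FM hc' ht0 hth1 hh1 hspr
  -- upper bound
  obtain ⟨C2, hC2, hup⟩ := ode_upper (a := a) (T := T) (t0 := t0) (m := fun s => u s 0)
    (m' := fun t => deriv (fun s => u s 0) t) ha hδ hm0
    (fun t ht => hmpos t ⟨by linarith [ht.1], ht.2⟩) (fun t ht => hmd t ⟨by linarith [ht.1], ht.2⟩)
    (by
      intro t ht
      have hd := hmd t ⟨by linarith [ht.1], ht.2⟩
      rw [hasDerivAt_iff_tendsto_slope] at hd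
      have hd2 := hd.mono_left (nhdsWithin_mono t (fun z (hz : z ∈ Ioi t) => ne_of_gt hz))
      apply ge_of_tendsto hd2
      have hmin : t < min (t + h1) T := lt_min (by linarith) ht.2
      filter_upwards [Ioo_mem_nhdsGT hmin] with s hs
      have hs1 : s < t + h1 := hs.2.trans_le (min_le_left _ _)
      have hs2 : s < T := hs.2.trans_le (min_le_right _ _)
      have hst : 0 < s - t := by linarith [hs.1]
      have := hFM (s - t) ⟨hst, by linarith⟩ t ht.1.le (by linarith) 0 h0C
      rw [show t + (s - t) = s by ring] at this
      rw [slope_def_field, le_div_iff₀ hst]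
      linarith)
  -- lower bound
  have hp1 : 1 < 1 / (a - 1) := by rw [lt_div_iff₀ (by linarith)]; linarith
  obtain ⟨C1, hC1, hlow⟩ := final_const (p := 1 / (a - 1))
    (c := c * 2 ^ (-(1 / (a - 1)))) hp1 (by positivity) hT
  refine ⟨C1, max C1 C2, hC1, le_max_left _ _, ?_⟩
  intro t ht x hx
  have htI : t ∈ Ico 0 T := ⟨by linarith [ht.1], ht.2⟩
  have hxI := Ioo_subset_Icc_self hx
  have hτ : 0 < T - t := by linarith [ht.2]
  refine ⟨?_, hmax t htI x hxI, ?_⟩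
  · set τ := T - t with hτd
    have ht1 : t - τ ∈ Ioo 0 T := ⟨by linarith [ht.1], by linarith [ht.2]⟩
    have hm := hclow (t - τ) ht1
    have e1 : T - (t - τ) = 2 * τ := by rw [hτd]; ring
    rw [e1, Real.mul_rpow (by norm_num) hτ.le, ← mul_assoc] at hm
    have hmnn : 0 ≤ Real.exp (c * 2 ^ (-(1 / (a - 1))) * τ ^ (-(1 / (a - 1)))) - 1 := by
      have : 0 ≤ c * 2 ^ (-(1 / (a - 1))) * τ ^ (-(1 / (a - 1))) := by positivity
      linarith [Real.one_le_exp this]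
    have hw := wave u (t - τ) t 0 1 _ (by linarith) one_pos hmnn
      (hu_cont.mono (fun q hq => ⟨⟨by linarith [hq.1.1, ht1.1], by linarith [hq.1.2, ht.2]⟩,
        ⟨by linarith [hq.2.1], hq.2.2⟩⟩))
      (fun s hs y hy => hu_nonneg s ⟨by linarith [hs.1, ht1.1], by linarith [hs.2, ht.2]⟩ y
        ⟨by linarith [hy.1], hy.2⟩)
      (fun s hs => hm.trans (S.mono h0C ht1.1.le hs.1 (by linarith [hs.2, ht.2])))
      (by
        intro s hs y hy
        have hyI : y ∈ Ioo (-1:ℝ) 1 := ⟨by linarith [hy.1], hy.2⟩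
        have hsI : s ∈ Ioo 0 T := ⟨by linarith [hs.1, ht1.1], by linarith [hs.2, ht.2]⟩
        obtain ⟨d, e, f, -⟩ := S.ev hsI hyI
        refine ⟨_, _, e, f, ?_⟩
        have := mul_nonneg (hV_nonneg y (Ioo_subset_Icc_self hyI))
          (FF_nonneg (a := a) (hu_nonneg s ⟨hsI.1.le, hsI.2⟩ y (Ioo_subset_Icc_self hyI)))
        linarith)
      |x| ⟨abs_nonneg x, abs_le.2 hxI⟩
    have habs : u t |x| = u t x := by
      rcases abs_choice x with h | h
      · rw [h]
      · rw [h, heven t htI x hxI]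
    rw [habs, show t - (t - τ) = τ by ring] at hw
    have h2 := hlow τ ⟨hτ, by linarith [ht.1]⟩
    have h3 : 0 ≤ 1 - |x| := by linarith [abs_le.2 hxI]
    have h4 := mul_le_mul_of_nonneg_right h2 h3
    norm_num only [sub_zero, one_pow] at hw h4 ⊢
    linarith
  · refine (hup t ⟨by linarith [ht.1], ht.2⟩).trans ?_
    rw [Real.exp_le_exp]
    exact mul_le_mul_of_nonneg_right (le_max_right _ _) (Real.rpow_nonneg hτ.le _)
end
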